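/- arXiv:solv-int/9903014 — 5 statements merged into one kernel-verified Lean document; each statement's English description precedes it below -/
import Mathlib

section
/- Let w be a smooth solution of P_XXXIV[α] on an open interval I ⊆ ℝ, and let ψ_0 be a nowhere-vanishing smooth function on I satisfying both (L1) and (L2) with this w and parameter α. Define the sequences ψ_n, φ_n and the Hankel determinants τ_N from w and ψ_0. Then for every integer N, the bilinear equation D_z³ τ_{N+1}·τ_N + (3w − 2z)·(D_z τ_{N+1}·τ_N) − 4(α + N + 1/2)·τ_{N+1}·τ_N = 0 holds identically on I. -/
/-- The Hankel determinant `τ_N` built from the sequences `ψ` (for `N > 0`) and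
`φ` (for `N < 0`); `τ_0 = 1` (determinant of the empty matrix). -/
noncomputable def hankelTau (ψ φ : ℕ → ℝ → ℝ) (N : ℤ) : ℝ → ℝ :=
  fun z =>
    if 0 ≤ N then
      Matrix.det (Matrix.of fun i j : Fin N.toNat => ψ ((i : ℕ) + (j : ℕ)) z)
    else
      Matrix.det (Matrix.of fun i j : Fin (-N).toNat => φ ((i : ℕ) + (j : ℕ)) z)


namespace P34

abbrev Sm (U : Set ℝ) (f : ℝ → ℝ) : Prop := ContDiffOn ℝ (⊤ : ℕ∞) f U

lemma Sm.der {U : Set ℝ} {f : ℝ → ℝ} (h : Sm U f) (hU : IsOpen U) : Sm U (deriv f) :=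
  ContDiffOn.deriv_of_isOpen h hU (by exact_mod_cast le_refl _)

lemma Sm.diff {U : Set ℝ} {f : ℝ → ℝ} (h : Sm U f) (hU : IsOpen U) {z : ℝ} (hz : z ∈ U) :
    DifferentiableAt ℝ f z :=
  (ContDiffOn.differentiableOn h (by simp)).differentiableAt (hU.mem_nhds hz)

lemma Sm.had {U : Set ℝ} {f : ℝ → ℝ} (h : Sm U f) (hU : IsOpen U) {z : ℝ} (hz : z ∈ U) :
    HasDerivAt f (deriv f z) z := (h.diff hU hz).hasDerivAt

lemma deriv_eqOn {U : Set ℝ} (hU : IsOpen U) {f g : ℝ → ℝ} (h : ∀ z ∈ U, f z = g z) :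
    ∀ z ∈ U, deriv f z = deriv g z := fun _ hz =>
  Filter.EventuallyEq.deriv_eq (Filter.eventually_of_mem (hU.mem_nhds hz) h)

/-- Hankel determinant of a sequence of functions. -/
noncomputable def tau (ψ : ℕ → ℝ → ℝ) (N : ℕ) : ℝ → ℝ :=
  fun z => Matrix.det (Matrix.of fun i j : Fin N => ψ ((i : ℕ) + (j : ℕ)) z)

/-- The bilinear expression. -/
noncomputable def bil (g f : ℝ → ℝ) (w : ℝ) (c : ℝ) (z : ℝ) : ℝ :=
  (deriv (deriv (deriv g)) z * f z - 3 * deriv (deriv g) z * deriv f z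
    + 3 * deriv g z * deriv (deriv f) z - g z * deriv (deriv (deriv f)) z)
  + (3 * w - 2 * z) * (deriv g z * f z - g z * deriv f z) - 4 * c * (g z * f z)

lemma tau_smooth {U : Set ℝ} {ψ : ℕ → ℝ → ℝ} (h : ∀ n, Sm U (ψ n)) (N : ℕ) :
    Sm U (tau ψ N) := by
  have : tau ψ N = fun z => ∑ σ : Equiv.Perm (Fin N),
      ((Equiv.Perm.sign σ : ℤ) : ℝ) * ∏ i, ψ ((σ i : ℕ) + (i : ℕ)) z := by
    funext z
    simp [tau, Matrix.det_apply']
  rw [this]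
  refine ContDiffOn.sum fun σ _ => ContDiffOn.mul contDiffOn_const ?_
  exact contDiffOn_prod fun i _ => h _

lemma seq_smooth {U : Set ℝ} (hU : IsOpen U) {ψ : ℕ → ℝ → ℝ} {φ : ℝ → ℝ}
    (hφ : Sm U φ) (h0 : Sm U (ψ 0))
    (hrec : ∀ n : ℕ, ∀ z ∈ U, ψ (n + 1) z =
      deriv (ψ n) z + φ z * ∑ k ∈ Finset.range n, ψ k z * ψ (n - 1 - k) z) :
    ∀ n, Sm U (ψ n) := by
  intro n
  induction n using Nat.strong_induction_on with
  | _ n ih =>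
    rcases n with _ | n
    · exact h0
    · refine ContDiffOn.congr ?_ (hrec n)
      refine ((ih n (by omega)).der hU).add (hφ.mul (ContDiffOn.sum fun k hk => ?_))
      have := Finset.mem_range.1 hk
      exact (ih k (by omega)).mul (ih _ (by omega))

/-- third order product rules -/
lemma prod_rules {U : Set ℝ} (hU : IsOpen U) {F p g : ℝ → ℝ} (hp : Sm U p) (hg : Sm U g)
    (hF : ∀ z ∈ U, F z = p z * g z) :
    (∀ z ∈ U, deriv F z = deriv p z * g z + p z * deriv g z) ∧
    (∀ z ∈ U, deriv (deriv F) z = deriv (deriv p) z * g z + 2 * deriv p z * deriv g z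
      + p z * deriv (deriv g) z) ∧
    (∀ z ∈ U, deriv (deriv (deriv F)) z = deriv (deriv (deriv p)) z * g z
      + 3 * deriv (deriv p) z * deriv g z + 3 * deriv p z * deriv (deriv g) z
      + p z * deriv (deriv (deriv g)) z) := by
  have h1 : ∀ z ∈ U, deriv F z = deriv p z * g z + p z * deriv g z := by
    intro z hz
    rw [deriv_eqOn hU hF z hz]
    exact ((hp.had hU hz).mul (hg.had hU hz)).deriv
  have h2 : ∀ z ∈ U, deriv (deriv F) z = deriv (deriv p) z * g z + 2 * deriv p z * deriv g z
      + p z * deriv (deriv g) z := by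
    intro z hz
    rw [deriv_eqOn hU h1 z hz]
    refine ((((hp.der hU).had hU hz).mul (hg.had hU hz)).add
      ((hp.had hU hz).mul ((hg.der hU).had hU hz))).deriv.trans ?_
    ring
  refine ⟨h1, h2, ?_⟩
  intro z hz
  rw [deriv_eqOn hU h2 z hz]
  refine (((((hp.der hU).der hU).had hU hz).mul (hg.had hU hz)).add
      ((((hp.der hU).had hU hz).const_mul 2).mul ((hg.der hU).had hU hz)) |>.add
      ((hp.had hU hz).mul (((hg.der hU).der hU).had hU hz))).deriv.trans ?_
  ring

lemma bil_gauge {U : Set ℝ} (hU : IsOpen U) {F G p g f : ℝ → ℝ} (hp : Sm U p) (hg : Sm U g)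
    (hf : Sm U f) (hG : ∀ z ∈ U, G z = p z * g z) (hF : ∀ z ∈ U, F z = p z * f z)
    {w w' c z : ℝ} (hz : z ∈ U)
    (hw : 2 * (p z * deriv (deriv p) z - deriv p z ^ 2) = p z ^ 2 * (w' - w)) :
    bil G F w c z = p z ^ 2 * bil g f w' c z := by
  obtain ⟨a1, a2, a3⟩ := prod_rules hU hp hg hG
  obtain ⟨b1, b2, b3⟩ := prod_rules hU hp hf hF
  unfold bil
  rw [a3 z hz, a2 z hz, a1 z hz, b3 z hz, b2 z hz, b1 z hz, hG z hz, hF z hz]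
  linear_combination 3 * (deriv g z * f z - g z * deriv f z) * hw

/-- The Schur complement sequence. -/
noncomputable def hs (ψ : ℕ → ℝ → ℝ) : ℕ → ℝ → ℝ
  | n => fun z => (ψ 0 z * ψ (n + 2) z - deriv (ψ 0) z * ψ (n + 1) z
      - ∑ k : Fin n, hs ψ k z * ψ (n - k) z) / ψ 0 z
termination_by n => n
decreasing_by exact k.2

lemma hs_rel (ψ : ℕ → ℝ → ℝ) (n : ℕ) (z : ℝ) (h0 : ψ 0 z ≠ 0) :
    ψ 0 z * ψ (n + 2) z = deriv (ψ 0) z * ψ (n + 1) z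
      + ∑ k ∈ Finset.range (n + 1), hs ψ k z * ψ (n - k) z := by
  rw [Finset.sum_range_succ, Nat.sub_self]
  have : hs ψ n z * ψ 0 z = ψ 0 z * ψ (n + 2) z - deriv (ψ 0) z * ψ (n + 1) z
      - ∑ k ∈ Finset.range n, hs ψ k z * ψ (n - k) z := by
    conv_lhs => rw [hs]
    simp only
    rw [div_mul_cancel₀ _ h0, Finset.sum_range]
  rw [this]; ring

lemma hs_smooth {V : Set ℝ} (hV : IsOpen V) {ψ : ℕ → ℝ → ℝ} (h : ∀ n, Sm V (ψ n))
    (h0 : ∀ z ∈ V, ψ 0 z ≠ 0) : ∀ n, Sm V (hs ψ n) := by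
  intro n
  induction n using Nat.strong_induction_on with
  | _ n ih =>
    rw [hs]
    refine ContDiffOn.div ?_ (h 0) h0
    refine (((h 0).mul (h _)).sub (((h 0).der hV).mul (h _))).sub (ContDiffOn.sum fun k _ => ?_)
    exact (ih k k.2).mul (h _)

/-- Algebraic Hankel identity. -/
lemma hankel_entry (f h : ℕ → ℝ) (b : ℝ) (h0 : f 0 ≠ 0) (h1 : f 1 = b)
    (hrel : ∀ n, f 0 * f (n + 2) = b * f (n + 1) + ∑ k ∈ Finset.range (n + 1), h k * f (n - k)) :
    ∀ i j, f 0 ^ 2 * f (i + j) = f 0 * f i * f j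
      + ∑ a ∈ Finset.range i, ∑ c ∈ Finset.range j, f (i - 1 - a) * h (a + c) * f (j - 1 - c) := by
  have hrel' : ∀ n, ∑ k ∈ Finset.range n, h k * f (n - 1 - k) = f 0 * f (n + 1) - b * f n := by
    intro n
    rcases n with _ | n
    · simp [h1]; ring
    · rw [hrel n]; simp
  intro i
  induction i with
  | zero => intro j; simp only [zero_add, Finset.range_zero, Finset.sum_empty]; ring
  | succ i ih =>
    intro j
    have e := ih (j + 1)
    rw [show i + 1 + j = i + (j + 1) by ring, e, Finset.sum_range_succ']
    have A : ∀ a ∈ Finset.range i,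
        ∑ c ∈ Finset.range (j + 1), f (i - 1 - a) * h (a + c) * f (j + 1 - 1 - c)
        = ∑ c ∈ Finset.range j, f (i + 1 - 1 - (a + 1)) * h (a + 1 + c) * f (j - 1 - c)
          + f j * (h a * f (i - 1 - a)) := by
      intro a ha
      rw [Finset.sum_range_succ']
      congr 1
      · refine Finset.sum_congr rfl fun c hc => ?_
        rw [show i + 1 - 1 - (a + 1) = i - 1 - a by omega,
          show j + 1 - 1 - (c + 1) = j - 1 - c by omega, show a + (c + 1) = a + 1 + c by ring]
      · simp; ring
    rw [Finset.sum_congr rfl A, Finset.sum_add_distrib, ← Finset.mul_sum, hrel' i]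
    have B : ∑ c ∈ Finset.range j, f (i + 1 - 1 - 0) * h (0 + c) * f (j - 1 - c)
        = f i * (f 0 * f (j + 1) - b * f j) := by
      rw [← hrel' j, Finset.mul_sum]
      refine Finset.sum_congr rfl fun c hc => ?_
      simp; ring
    rw [B]; ring

lemma hankel_det (f h : ℕ → ℝ) (b : ℝ) (h0 : f 0 ≠ 0) (h1 : f 1 = b)
    (hrel : ∀ n, f 0 * f (n + 2) = b * f (n + 1) + ∑ k ∈ Finset.range (n + 1), h k * f (n - k))
    (N : ℕ) :
    Matrix.det (Matrix.of fun i j : Fin (N + 1) => f ((i : ℕ) + (j : ℕ)))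
      = f 0 * Matrix.det (Matrix.of fun i j : Fin N => h ((i : ℕ) + (j : ℕ))) := by
  set T : Matrix (Fin (N + 1)) (Fin (N + 1)) ℝ :=
    Matrix.of fun i j => if (j : ℕ) ≤ i then f ((i : ℕ) - j) else 0 with hT
  set H : Matrix (Fin N) (Fin N) ℝ := Matrix.of fun i j => h ((i : ℕ) + (j : ℕ)) with hH
  set B : Matrix (Fin (N + 1)) (Fin (N + 1)) ℝ :=
    Matrix.of fun i j => Fin.cases (Fin.cases (f 0) (fun _ => 0) j)
      (fun i' => Fin.cases 0 (fun j' => H i' j') j) i with hB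
  have hdetT : T.det = f 0 ^ (N + 1) := by
    rw [Matrix.det_of_isLowerTriangular]
    · simp [hT]
    · intro i j hij
      have : (i : ℕ) < j := hij
      simp only [hT, Matrix.of_apply]
      rw [if_neg (by omega)]
  have hdetB : B.det = f 0 * H.det := by
    rw [Matrix.det_succ_row_zero, Fin.sum_univ_succ]
    have : B.submatrix Fin.succ (Fin.succAbove 0) = H := by
      ext i j; simp [hB]
    rw [this]
    simp [hB]
  have key : T * B * T.transpose
      = (f 0 ^ 2) • (Matrix.of fun i j : Fin (N + 1) => f ((i : ℕ) + (j : ℕ))) := by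
    ext i j
    have extend : ∀ (m : Fin (N + 1)) (g : ℕ → ℝ),
        ∑ a : Fin N, (if (a : ℕ) + 1 ≤ m then f ((m : ℕ) - (a + 1)) else 0) * g a
          = ∑ a ∈ Finset.range m, f (m - 1 - a) * g a := by
      intro m g
      rw [Fin.sum_univ_eq_sum_range
        (fun a => (if a + 1 ≤ (m : ℕ) then f ((m : ℕ) - (a + 1)) else 0) * g a) N]
      have hm : (m : ℕ) ≤ N := by omega
      rw [← Finset.sum_subset (Finset.range_mono hm)]
      · refine Finset.sum_congr rfl fun a ha => ?_
        have := Finset.mem_range.1 ha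
        rw [if_pos (by omega), show (m : ℕ) - (a + 1) = m - 1 - a by omega]
      · intro a _ ha
        have : ¬ a < (m : ℕ) := by simpa using ha
        rw [if_neg (by omega), zero_mul]
    simp only [Matrix.smul_apply, Matrix.of_apply, smul_eq_mul]
    rw [hankel_entry f h b h0 h1 hrel i j, Matrix.mul_assoc, Matrix.mul_apply]
    have inner : ∀ a : Fin (N + 1), (B * T.transpose) a j
        = Fin.cases (f 0 * f j)
          (fun a' => ∑ c ∈ Finset.range j, f (j - 1 - c) * h ((a' : ℕ) + c)) a := by
      intro a
      rw [Matrix.mul_apply, Fin.sum_univ_succ]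
      refine Fin.cases ?_ (fun a' => ?_) a
      · simp [hB, hT]
      · simp only [Fin.cases_succ]
        rw [← extend j (fun c => h ((a' : ℕ) + c))]
        simp [hB, hT, hH, mul_comm]
        refine Finset.sum_congr rfl fun x _ => if_congr ?_ rfl rfl
        rw [Fin.le_def, Fin.val_succ]; omega
    simp only [inner]
    rw [Fin.sum_univ_succ]
    simp only [Fin.cases_zero, Fin.cases_succ]
    congr 1
    · simp [hT]; ring
    · have := extend i (fun a => ∑ c ∈ Finset.range j, f (j - 1 - c) * h (a + c))
      simp only [hT, Matrix.of_apply, Fin.val_succ]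
      rw [this]
      refine Finset.sum_congr rfl fun a _ => ?_
      rw [Finset.mul_sum]
      refine Finset.sum_congr rfl fun c _ => ?_
      ring
  have := congrArg Matrix.det key
  rw [Matrix.det_mul, Matrix.det_mul, Matrix.det_transpose, hdetT, hdetB, Matrix.det_smul,
    Fintype.card_fin] at this
  have hne : (f 0 ^ 2) ^ (N + 1) ≠ 0 := pow_ne_zero _ (pow_ne_zero _ h0)
  apply mul_left_cancel₀ hne
  rw [← this]; ring


open PowerSeries in
lemma coeff_X2 (u v : ℕ → ℝ) (n : ℕ) :
    coeff (n + 1) ((X : PowerSeries ℝ) ^ 2 * (PowerSeries.mk u * PowerSeries.mk v))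
      = ∑ k ∈ Finset.range n, u k * v (n - 1 - k) := by
  rw [pow_two, mul_assoc, coeff_succ_X_mul]
  rcases n with _ | n
  · simp
  · rw [coeff_succ_X_mul, coeff_mul, Finset.Nat.sum_antidiagonal_eq_sum_range_succ_mk]
    simp

open PowerSeries in
lemma coeff_X2_zero (G : PowerSeries ℝ) :
    coeff 0 ((X : PowerSeries ℝ) ^ 2 * G) = 0 := by
  rw [pow_two, mul_assoc, coeff_zero_X_mul]

open PowerSeries in
lemma riccati_alg (f f1 h h1 : ℕ → ℝ) (a1 a2 p : ℝ) (h0 : f 0 ≠ 0) (hf1 : f1 0 = a1)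
    (hA : ∀ n, f (n + 1) = f1 n + p * ∑ k ∈ Finset.range n, f k * f (n - 1 - k))
    (hB : ∀ n, f 0 * f (n + 2) = a1 * f (n + 1) + ∑ k ∈ Finset.range (n + 1), h k * f (n - k))
    (hB' : ∀ n, a1 * f (n + 2) + f 0 * f1 (n + 2) = a2 * f (n + 1) + a1 * f1 (n + 1)
      + ∑ k ∈ Finset.range (n + 1), (h1 k * f (n - k) + h k * f1 (n - k)))
    (ha2 : f1 1 = a2) (hh : f 0 * h 0 = f 0 * a2 - a1 ^ 2 + p * f 0 ^ 3) (n : ℕ) :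
    f 0 * h (n + 1) = f 0 * h1 n + ∑ k ∈ Finset.range n, h k * h (n - 1 - k) := by
  have hf : f 1 = a1 := by rw [← hf1]; simpa using hA 0
  set F : PowerSeries ℝ := PowerSeries.mk f with hF
  set F1 : PowerSeries ℝ := PowerSeries.mk f1 with hF1
  set H : PowerSeries ℝ := PowerSeries.mk h with hH
  set H1 : PowerSeries ℝ := PowerSeries.mk h1 with hH1
  have A : F = C (f 0) + X * F1 + C p * (X ^ 2 * (F * F)) := by
    ext n
    rcases n with _ | n
    · simp [hF]
    · rw [map_add, map_add, coeff_succ_X_mul, coeff_C_mul, coeff_X2]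
      simp [hF, hF1, coeff_C, hA n]
  have B : C (f 0) * F = C (f 0 ^ 2) + C a1 * (X * F) + X ^ 2 * (H * F) := by
    ext n
    rcases n with _ | n
    · rw [map_add, map_add, coeff_X2_zero]; simp [hF]; ring
    · rw [map_add, map_add, coeff_C_mul, coeff_C_mul, coeff_succ_X_mul, coeff_X2, coeff_succ_C]
      rcases n with _ | n
      · simp [hF, hf]; ring
      · have := hB n
        simp [hF, this]
  have B' : C a1 * F + C (f 0) * F1 = C (2 * f 0 * a1) + C a2 * (X * F) + C a1 * (X * F1)
      + X ^ 2 * (H1 * F) + X ^ 2 * (H * F1) := by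
    ext n
    rcases n with _ | n
    · simp only [map_add, coeff_X2_zero]; simp [hF, hF1, hf1]; ring
    · simp only [map_add, coeff_C_mul, coeff_succ_X_mul, hH, hH1, hF, hF1, coeff_X2]
      rcases n with _ | n
      · simp [coeff_C, hf, ha2, hf1]; ring
      · have := hB' n
        rw [Finset.sum_add_distrib] at this
        simp [coeff_C]
        linarith
  have hhC : C (f 0) * C (h 0) = C (f 0) * C a2 - C a1 ^ 2 + C p * C (f 0) ^ 3 := by
    simp only [← map_mul, ← map_pow, ← map_sub, ← map_add, hh]
  have hFne : F ≠ 0 := by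
    intro h
    apply h0
    have := congrArg (coeff 0) h
    simpa [hF] using this
  have hne : (X : PowerSeries ℝ) ^ 2 * F ^ 2 ≠ 0 :=
    mul_ne_zero (pow_ne_zero _ X_ne_zero) (pow_ne_zero _ hFne)
  have key : C (f 0) * H = C (f 0) * C (h 0) + C (f 0) * (X * H1) + X ^ 2 * (H * H) := by
    apply mul_left_cancel₀ hne
    simp only [map_mul, map_pow] at B B'
    have e2 : (C (2 : ℝ)) = (2 : PowerSeries ℝ) := map_ofNat C 2
    rw [e2] at B'
    generalize C (f 0) = a at *
    generalize C (h 0) = b at *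
    generalize C a1 = a1 at *
    generalize C a2 = a2 at *
    generalize C p = p at *
    linear_combination (-a * F - a * X * F1 + (a * F - a ^ 2 - a1 * X * F) + X ^ 2 * H * F) * B
      + a * X * F * B' + a ^ 3 * A - X ^ 2 * F ^ 2 * hhC
  have := congrArg (coeff (n + 1)) key
  rw [map_add, map_add, coeff_C_mul, coeff_C_mul, coeff_C_mul, coeff_succ_X_mul, coeff_X2] at this
  simpa [hH, hH1, coeff_C] using this

lemma hs_zero {V : Set ℝ} {ψ : ℕ → ℝ → ℝ} {φ : ℝ → ℝ} (hV : IsOpen V)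
    (h0 : ∀ z ∈ V, ψ 0 z ≠ 0)
    (hrec : ∀ n : ℕ, ∀ z ∈ V, ψ (n + 1) z =
      deriv (ψ n) z + φ z * ∑ k ∈ Finset.range n, ψ k z * ψ (n - 1 - k) z) :
    ∀ z ∈ V, ψ 0 z * hs ψ 0 z = ψ 0 z * deriv (deriv (ψ 0)) z - deriv (ψ 0) z ^ 2
      + φ z * ψ 0 z ^ 3 := by
  intro z hz
  have h1 : ∀ z ∈ V, ψ 1 z = deriv (ψ 0) z := fun z hz => by simpa using hrec 0 z hz
  have h2 := hrec 1 z hz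
  have h3 := hs_rel ψ 0 z (h0 z hz)
  have h4 := deriv_eqOn hV h1 z hz
  simp at h2 h3
  rw [h2, h4, h1 z hz] at h3
  linear_combination -h3

lemma hs_riccati {V : Set ℝ} {ψ : ℕ → ℝ → ℝ} {φ : ℝ → ℝ} (hV : IsOpen V)
    (hs0 : ∀ n, Sm V (ψ n))
    (h0 : ∀ z ∈ V, ψ 0 z ≠ 0)
    (hrec : ∀ n : ℕ, ∀ z ∈ V, ψ (n + 1) z =
      deriv (ψ n) z + φ z * ∑ k ∈ Finset.range n, ψ k z * ψ (n - 1 - k) z) :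
    ∀ n : ℕ, ∀ z ∈ V, hs ψ (n + 1) z =
      deriv (hs ψ n) z + (ψ 0 z)⁻¹ * ∑ k ∈ Finset.range n, hs ψ k z * hs ψ (n - 1 - k) z := by
  intro n z hz
  have hsm := hs_smooth hV hs0 h0
  have h1 : ∀ z ∈ V, ψ 1 z = deriv (ψ 0) z := fun z hz => by simpa using hrec 0 z hz
  have := riccati_alg (fun n => ψ n z) (fun n => deriv (ψ n) z) (fun n => hs ψ n z)
    (fun n => deriv (hs ψ n) z) (deriv (ψ 0) z) (deriv (deriv (ψ 0)) z) (φ z) (h0 z hz) rfl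
    (fun n => hrec n z hz) (fun n => hs_rel ψ n z (h0 z hz)) ?_ (deriv_eqOn hV h1 z hz)
    (hs_zero hV h0 hrec z hz) n
  · have hne := h0 z hz
    field_simp
    linear_combination this
  · intro n
    have e := deriv_eqOn hV (fun z hz => hs_rel ψ n z (h0 z hz)) z hz
    have L := (((hs0 0).had hV hz).mul ((hs0 (n + 2)).had hV hz)).deriv
    have R := (((((hs0 0).der hV).had hV hz).mul ((hs0 (n + 1)).had hV hz)).add
      (HasDerivAt.fun_sum (u := Finset.range (n + 1)) fun k _ =>
        ((hsm k).had hV hz).mul ((hs0 (n - k)).had hV hz))).deriv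
    exact L.symm.trans (e.trans R)

/-- Main induction. -/
lemma main_ind (N : ℕ) : ∀ (U : Set ℝ) (_ : IsOpen U) (α : ℝ) (φ : ℝ → ℝ) (ψ : ℕ → ℝ → ℝ)
    (_ : Sm U φ) (_ : Sm U (ψ 0))
    (_ : ∀ n : ℕ, ∀ z ∈ U, ψ (n + 1) z =
      deriv (ψ n) z + φ z * ∑ k ∈ Finset.range n, ψ k z * ψ (n - 1 - k) z)
    (_ : ∀ z ∈ U, deriv (deriv (ψ 0)) z = (2 * z - 2 * (ψ 0 z * φ z)) * ψ 0 z)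
    (_ : ∀ z ∈ U, φ z * deriv (ψ 0) z - ψ 0 z * deriv φ z = 2 * α),
    ∀ z ∈ U, bil (tau ψ (N + 1)) (tau ψ N) (2 * (ψ 0 z * φ z)) (α + N + 1 / 2) z = 0 := by
  induction N with
  | zero =>
    intro U hU α φ ψ hφ h0 hrec hL hW z hz
    have e1 : tau ψ (0 + 1) = ψ 0 := by funext z; simp [tau]
    have e0 : tau ψ 0 = fun _ => 1 := by funext z; simp [tau]
    rw [e1, e0]
    have d3 : deriv (deriv (deriv (ψ 0))) z =
        (2 - 2 * (deriv (ψ 0) z * φ z + ψ 0 z * deriv φ z)) * ψ 0 z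
        + (2 * z - 2 * (ψ 0 z * φ z)) * deriv (ψ 0) z := by
      rw [deriv_eqOn hU hL z hz]
      refine HasDerivAt.deriv (HasDerivAt.mul (HasDerivAt.sub ?_
        (((h0.had hU hz).mul (hφ.had hU hz)).const_mul 2)) (h0.had hU hz))
      simpa using (hasDerivAt_id z).const_mul 2
    simp only [bil, deriv_const', d3]
    push_cast
    linear_combination 2 * ψ 0 z * hW z hz
  | succ N ih =>
    intro U hU α φ ψ hφ h0 hrec hL hW
    have hsm := seq_smooth hU hφ h0 hrec
    -- the open set where `ψ 0` does not vanish
    have hVopen : IsOpen {z | z ∈ U ∧ ψ 0 z ≠ 0} := by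
      have := (ContDiffOn.continuousOn h0).isOpen_inter_preimage hU
        (isOpen_compl_singleton (x := (0 : ℝ)))
      exact this
    have caseV : ∀ z ∈ U, ψ 0 z ≠ 0 →
        bil (tau ψ (N + 1 + 1)) (tau ψ (N + 1)) (2 * (ψ 0 z * φ z))
          (α + (N + 1 : ℕ) + 1 / 2) z = 0 := by
      set V := {z | z ∈ U ∧ ψ 0 z ≠ 0} with hV
      have hVU : V ⊆ U := fun z hz => hz.1
      have hne : ∀ z ∈ V, ψ 0 z ≠ 0 := fun z hz => hz.2
      have hsmV : ∀ n, Sm V (ψ n) := fun n => ContDiffOn.mono (hsm n) hVU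
      have hφV : Sm V φ := ContDiffOn.mono hφ hVU
      have hrecV : ∀ n : ℕ, ∀ z ∈ V, ψ (n + 1) z =
        deriv (ψ n) z + φ z * ∑ k ∈ Finset.range n, ψ k z * ψ (n - 1 - k) z :=
        fun n z hz => hrec n z (hVU hz)
      have h1 : ∀ z ∈ V, ψ 1 z = deriv (ψ 0) z := fun z hz => by simpa using hrecV 0 z hz
      have hhs := hs_smooth hVopen hsmV hne
      have hzero := hs_zero hVopen hne hrecV
      have hric := hs_riccati hVopen hsmV hne hrecV
      have hq : Sm V (fun z => (ψ 0 z)⁻¹) := ContDiffOn.inv (hsmV 0) hne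
      have htau : ∀ M, ∀ z ∈ V, tau ψ (M + 1) z = ψ 0 z * tau (hs ψ) M z := by
        intro M z hz
        exact hankel_det (fun n => ψ n z) (fun n => hs ψ n z) (deriv (ψ 0) z) (hne z hz)
          (h1 z hz) (fun n => hs_rel ψ n z (hne z hz)) M
      have dq : ∀ z ∈ V, deriv (fun z => (ψ 0 z)⁻¹) z = -deriv (ψ 0) z / ψ 0 z ^ 2 := by
        intro z hz
        exact (((hsmV 0).had hVopen hz).inv (hne z hz)).deriv
      have ddq : ∀ z ∈ V, deriv (deriv (fun z => (ψ 0 z)⁻¹)) z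
          = -deriv (deriv (ψ 0)) z / ψ 0 z ^ 2 + 2 * deriv (ψ 0) z ^ 2 / ψ 0 z ^ 3 := by
        intro z hz
        rw [deriv_eqOn hVopen dq z hz]
        refine ((((hsmV 0).der hVopen).had hVopen hz).neg.div
          (((hsmV 0).had hVopen hz).pow 2) (pow_ne_zero _ (hne z hz))).deriv.trans ?_
        have := hne z hz
        simp only [Pi.neg_apply, Pi.pow_apply]
        field_simp
        push_cast
        ring
      -- derivative of `ψ 0 * hs 0`
      have dzero : ∀ z ∈ V, deriv (ψ 0) z * hs ψ 0 z + ψ 0 z * deriv (hs ψ 0) z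
          = ψ 0 z ^ 2 * (2 + 2 * α) := by
        intro z hz
        have hE : ∀ z ∈ V, ψ 0 z * hs ψ 0 z =
            2 * z * ψ 0 z ^ 2 - φ z * ψ 0 z ^ 3 - deriv (ψ 0) z ^ 2 := by
          intro z hz
          rw [hzero z hz, hL z (hVU hz)]; ring
        have e := deriv_eqOn hVopen hE z hz
        have p := (hsmV 0).had hVopen hz
        have L := (p.mul ((hhs 0).had hVopen hz)).deriv
        have R := (((((hasDerivAt_id z).const_mul 2).mul (p.pow 2)).sub
          ((hφV.had hVopen hz).mul (p.pow 3))).sub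
          ((((hsmV 0).der hVopen).had hVopen hz).pow 2)).deriv
        have t := L.symm.trans (e.trans R)
        rw [t]
        simp only [Pi.pow_apply, id, hL z (hVU hz)]
        push_cast
        linear_combination ψ 0 z ^ 2 * hW z (hVU hz)
      have hW' : ∀ z ∈ V, (ψ 0 z)⁻¹ * deriv (hs ψ 0) z
          - hs ψ 0 z * deriv (fun z => (ψ 0 z)⁻¹) z = 2 * (α + 1) := by
        intro z hz
        have := hne z hz
        rw [dq z hz]
        field_simp
        linear_combination dzero z hz
      have hq2 : ∀ z ∈ V, deriv (deriv (fun z => (ψ 0 z)⁻¹)) z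
          = (2 * z - 2 * (hs ψ 0 z * (ψ 0 z)⁻¹)) * (ψ 0 z)⁻¹ := by
        intro z hz
        have := hne z hz
        rw [ddq z hz]
        field_simp
        linear_combination 2 * hzero z hz + ψ 0 z * hL z (hVU hz)
      have hL' : ∀ z ∈ V, deriv (deriv (hs ψ 0)) z
          = (2 * z - 2 * (hs ψ 0 z * (ψ 0 z)⁻¹)) * hs ψ 0 z := by
        intro z hz
        have e := deriv_eqOn hVopen hW' z hz
        have L := (((hq.had hVopen hz).mul (((hhs 0).der hVopen).had hVopen hz)).sub
          (((hhs 0).had hVopen hz).mul ((hq.der hVopen).had hVopen hz))).deriv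
        have t := L.symm.trans (e.trans (deriv_const z _))
        rw [hq2 z hz] at t
        have := hne z hz
        apply mul_left_cancel₀ (inv_ne_zero this)
        linear_combination t
      intro z hzU hzne
      have hz : z ∈ V := ⟨hzU, hzne⟩
      have I := ih V hVopen (α + 1) (fun z => (ψ 0 z)⁻¹) (hs ψ) hq (hhs 0) hric hL' hW' z hz
      rw [bil_gauge hVopen (hsmV 0) (tau_smooth hhs (N + 1)) (tau_smooth hhs N)
        (htau (N + 1)) (htau N) (w' := 2 * (hs ψ 0 z * (ψ 0 z)⁻¹)) hz]
      · rw [show α + ((N + 1 : ℕ) : ℝ) + 1 / 2 = α + 1 + N + 1 / 2 by push_cast; ring, I, mul_zero]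
      · field_simp
        linear_combination -hzero z hz
    intro z hz
    by_contra hcon
    set E : ℝ → ℝ := fun z => bil (tau ψ (N + 1 + 1)) (tau ψ (N + 1)) (2 * (ψ 0 z * φ z))
          (α + (N + 1 : ℕ) + 1 / 2) z with hE
    have hEc : ContinuousOn E U := by
      have c := fun M => ContDiffOn.continuousOn (tau_smooth hsm M)
      have c1 := fun M => ContDiffOn.continuousOn ((tau_smooth hsm M).der hU)
      have c2 := fun M => ContDiffOn.continuousOn (((tau_smooth hsm M).der hU).der hU)
      have c3 := fun M => ContDiffOn.continuousOn ((((tau_smooth hsm M).der hU).der hU).der hU)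
      have cφ := ContDiffOn.continuousOn hφ
      have cψ := ContDiffOn.continuousOn h0
      have a0 := c (N + 1 + 1)
      have a1 := c1 (N + 1 + 1)
      have a2 := c2 (N + 1 + 1)
      have a3 := c3 (N + 1 + 1)
      have b0 := c (N + 1)
      have b1 := c1 (N + 1)
      have b2 := c2 (N + 1)
      have b3 := c3 (N + 1)
      simp only [hE, bil]
      refine ((((((a3.mul b0).sub ((continuousOn_const.mul a2).mul b1)).add
        ((continuousOn_const.mul a1).mul b2)).sub (a0.mul b3)).add
        (((continuousOn_const.mul (continuousOn_const.mul (cψ.mul cφ))).sub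
          (continuousOn_const.mul continuousOn_id)).mul ((a1.mul b0).sub (a0.mul b1)))).sub
        (continuousOn_const.mul (a0.mul b0)))
    have hOopen : IsOpen (U ∩ E ⁻¹' {0}ᶜ) :=
      hEc.isOpen_inter_preimage hU isOpen_compl_singleton
    set O := U ∩ E ⁻¹' {0}ᶜ with hO
    have hzO : z ∈ O := ⟨hz, hcon⟩
    have hvan0 : ∀ x ∈ O, ψ 0 x = 0 := by
      intro x hx
      by_contra hne
      exact hx.2 (caseV x hx.1 hne)
    have hvan : ∀ n, ∀ x ∈ O, ψ n x = 0 := by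
      intro n
      induction n using Nat.strong_induction_on with
      | _ n ihn =>
        rcases n with _ | n
        · exact hvan0
        · intro x hx
          rw [hrec n x hx.1, deriv_eqOn hOopen (g := fun _ => 0) (ihn n (by omega)) x hx]
          rw [Finset.sum_eq_zero]
          · simp
          · intro k hk
            have := Finset.mem_range.1 hk
            rw [ihn k (by omega) x hx, zero_mul]
    have htv : ∀ M, ∀ x ∈ O, tau ψ (M + 1) x = 0 := by
      intro M x hx
      unfold tau
      exact Matrix.det_eq_zero_of_row_eq_zero 0 fun j => hvan _ x hx
    have d0 : ∀ f : ℝ → ℝ, (∀ x ∈ O, f x = 0) → ∀ x ∈ O, deriv f x = 0 := by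
      intro f hf x hx
      rw [deriv_eqOn hOopen (g := fun _ => 0) hf x hx]; simp
    apply hcon
    unfold bil
    have t1 := htv (N + 1)
    have t0 := htv N
    rw [d0 _ (d0 _ (d0 _ t1)) z hzO, d0 _ (d0 _ t1) z hzO, d0 _ t1 z hzO, t1 z hzO,
      t0 z hzO, d0 _ t0 z hzO]
    ring

lemma hankelTau_nat (ψ φ : ℕ → ℝ → ℝ) (n : ℕ) : hankelTau ψ φ (n : ℤ) = tau ψ n := by
  funext z
  simp [hankelTau, tau]

lemma hankelTau_neg (ψ φ : ℕ → ℝ → ℝ) (n : ℕ) : hankelTau ψ φ (-(n : ℤ)) = tau φ n := by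
  rcases n with _ | n
  · funext z; simp [hankelTau, tau]
  · funext z
    have h : ¬ (0 : ℤ) ≤ -((n + 1 : ℕ) : ℤ) := by omega
    have h2 : (- -((n + 1 : ℕ) : ℤ)).toNat = n + 1 := by omega
    simp only [hankelTau, tau, if_neg h]
    rw [h2]

end P34


/-- The bilinear equation `[D_z³ + (3w - 2z) D_z - 4(α + N + 1/2)] τ_{N+1}·τ_N = 0`, where
`D_z g·f = g'f - gf'` and `D_z³ g·f = g'''f - 3g''f' + 3g'f'' - gf'''`. -/
theorem painleve34_bilinear_Dcube
    (I : Set ℝ) (hIopen : IsOpen I) (hIconn : I.OrdConnected)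
    (α : ℝ) (w ψ0 : ℝ → ℝ)
    (hw_smooth : ContDiffOn ℝ (⊤ : ℕ∞) w I)
    (hw_P34 : ∀ z ∈ I,
      2 * w z * deriv (deriv w) z - (deriv w z) ^ 2 + 4 * (w z) ^ 3
        - 8 * z * (w z) ^ 2 + 16 * α ^ 2 = 0)
    (hψ0_smooth : ContDiffOn ℝ (⊤ : ℕ∞) ψ0 I)
    (hψ0_ne : ∀ z ∈ I, ψ0 z ≠ 0)
    (hL1 : ∀ z ∈ I, 2 * w z * deriv ψ0 z - deriv w z * ψ0 z - 4 * α * ψ0 z = 0)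
    (hL2 : ∀ z ∈ I, deriv (deriv ψ0) z + (w z - 2 * z) * ψ0 z = 0)
    (ψ φ : ℕ → ℝ → ℝ)
    (hψ_zero : ψ 0 = ψ0)
    (hφ_zero : ∀ z ∈ I, φ 0 z = w z / (2 * ψ0 z))
    (hψ_rec : ∀ n : ℕ, ∀ z ∈ I, ψ (n + 1) z =
      deriv (ψ n) z + (w z / (2 * ψ0 z)) *
        ∑ k ∈ Finset.range n, ψ k z * ψ (n - 1 - k) z)
    (hφ_rec : ∀ n : ℕ, ∀ z ∈ I, φ (n + 1) z =
      deriv (φ n) z + ψ0 z *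
        ∑ k ∈ Finset.range n, φ k z * φ (n - 1 - k) z) :
    ∀ N : ℤ, ∀ z ∈ I,
    ∀ N : ℤ, ∀ z ∈ I,
      (deriv (deriv (deriv (hankelTau ψ φ (N + 1)))) z * hankelTau ψ φ N z
        - 3 * deriv (deriv (hankelTau ψ φ (N + 1))) z * deriv (hankelTau ψ φ N) z
        + 3 * deriv (hankelTau ψ φ (N + 1)) z * deriv (deriv (hankelTau ψ φ N)) z
        - hankelTau ψ φ (N + 1) z * deriv (deriv (deriv (hankelTau ψ φ N))) z)
      + (3 * w z - 2 * z) * (deriv (hankelTau ψ φ (N + 1)) z * hankelTau ψ φ N z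
        - hankelTau ψ φ (N + 1) z * deriv (hankelTau ψ φ N) z)
      - 4 * (α + (N : ℝ) + 1 / 2) * (hankelTau ψ φ (N + 1) z * hankelTau ψ φ N z) = 0 := by
  intro _ _ _ N z hz
  have hφs : P34.Sm I (φ 0) := by
    refine ContDiffOn.congr (ContDiffOn.div hw_smooth (contDiffOn_const.mul hψ0_smooth) ?_) hφ_zero
    intro z hz
    exact mul_ne_zero two_ne_zero (hψ0_ne z hz)
  subst hψ_zero
  have hw : ∀ z ∈ I, w z = 2 * (ψ 0 z * φ 0 z) := by
    intro z hz
    have := hψ0_ne z hz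
    rw [hφ_zero z hz]; field_simp
  have hdw : ∀ z ∈ I, deriv w z = 2 * (deriv (ψ 0) z * φ 0 z + ψ 0 z * deriv (φ 0) z) := by
    intro z hz
    rw [P34.deriv_eqOn hIopen hw z hz]
    exact (((P34.Sm.had hψ0_smooth hIopen hz).mul
      (P34.Sm.had hφs hIopen hz)).const_mul 2).deriv
  have hW : ∀ z ∈ I, φ 0 z * deriv (ψ 0) z - ψ 0 z * deriv (φ 0) z = 2 * α := by
    intro z hz
    have h := hL1 z hz
    rw [hw z hz, hdw z hz] at h
    apply mul_left_cancel₀ (hψ0_ne z hz)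
    linear_combination h / 2
  have hL : ∀ z ∈ I, deriv (deriv (ψ 0)) z = (2 * z - 2 * (ψ 0 z * φ 0 z)) * ψ 0 z := by
    intro z hz
    have h := hL2 z hz
    rw [hw z hz] at h
    linear_combination h
  have hLφ : ∀ z ∈ I, deriv (deriv (φ 0)) z = (2 * z - 2 * (φ 0 z * ψ 0 z)) * φ 0 z := by
    intro z hz
    have e := P34.deriv_eqOn hIopen hW z hz
    have p := P34.Sm.had hψ0_smooth hIopen hz
    have p1 := P34.Sm.had (P34.Sm.der hψ0_smooth hIopen) hIopen hz
    have q := P34.Sm.had hφs hIopen hz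
    have q1 := P34.Sm.had (P34.Sm.der hφs hIopen) hIopen hz
    have L := ((q.mul p1).sub (p.mul q1)).deriv
    have t := L.symm.trans (e.trans (deriv_const z _))
    rw [hL z hz] at t
    apply mul_left_cancel₀ (hψ0_ne z hz)
    linear_combination -t
  rcases lt_or_ge N 0 with hN | hN
  · obtain ⟨M, rfl⟩ : ∃ M : ℕ, N = -((M + 1 : ℕ) : ℤ) := ⟨(-N - 1).toNat, by omega⟩
    have e : -((M + 1 : ℕ) : ℤ) + 1 = -(M : ℤ) := by push_cast; ring
    rw [e, P34.hankelTau_neg, P34.hankelTau_neg]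
    have := P34.main_ind M I hIopen (-α) (ψ 0) φ hψ0_smooth hφs hφ_rec hLφ
      (fun z hz => by linear_combination -hW z hz) z hz
    unfold P34.bil at this
    rw [hw z hz]
    push_cast
    linear_combination -this
  · obtain ⟨M, rfl⟩ := Int.eq_ofNat_of_zero_le hN
    have e : (M : ℤ) + 1 = ((M + 1 : ℕ) : ℤ) := by push_cast; ring
    rw [e, P34.hankelTau_nat, P34.hankelTau_nat]
    have := P34.main_ind M I hIopen α (φ 0) ψ hφs hψ0_smooth
      (fun n z hz => by rw [hφ_zero z hz]; exact hψ_rec n z hz) hL hW z hz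
    unfold P34.bil at this
    rw [hw z hz]
    push_cast
    linear_combination this
end

section
/- Let w be a smooth function on an open interval I ⊆ ℝ and let ψ_0 be a nowhere-vanishing smooth function on I satisfying (L1) and (L2) with w and a parameter α; define the sequence ψ_n by the recursion. Then for every N ≥ 2, the identity τ_N[0,…,N−2,N+1] − τ_N[0,…,N−3,N−1,N] = (−w/2 + 2N·z)·τ_N holds on I. -/
/-- The `N×N` determinant with `(i,j)` entry `ψ_{i-1+c_j}` (rows/columns indexed from 0),
i.e. the Hankel determinant of the sequence `ψ` with column offsets `c`.
`tauShift ψ N (fun j => j)` is the Hankel determinant `τ_N` itself. -/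
noncomputable def tauShift (ψ : ℕ → ℝ → ℝ) (N : ℕ) (c : Fin N → ℕ) (z : ℝ) : ℝ :=
  Matrix.det (Matrix.of fun i j : Fin N => ψ ((i : ℕ) + c j) z)

section
open PowerSeries

def HDP (F : ℝ → ℝ⟦X⟧) (F' : ℝ⟦X⟧) (z : ℝ) : Prop :=
  ∀ n, HasDerivAt (fun y => coeff n (F y)) (coeff n F') z
lemma HDP.add {F G : ℝ → ℝ⟦X⟧} {F' G' z} (h : HDP F F' z) (k : HDP G G' z) :
   HDP (fun y => F y + G y) (F' + G') z := by
  intro n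
  simpa using (h n).fun_add (k n)
lemma HDP.mul {F G : ℝ → ℝ⟦X⟧} {F' G' z} (h : HDP F F' z) (k : HDP G G' z) :
   HDP (fun y => F y * G y) (F' * G z + F z * G') z := by
  intro n
  simp only [coeff_mul, map_add, ← Finset.sum_add_distrib]
  exact HasDerivAt.fun_sum fun i _ => (h i.1).mul (k i.2)
lemma HDP.const (G : ℝ⟦X⟧) (z) : HDP (fun _ => G) 0 z := by
  intro n
  simpa using hasDerivAt_const z _
lemma HDP.fC {f : ℝ → ℝ} {f' z} (h : HasDerivAt f f' z) : HDP (fun y => C (f y)) (C f') z := by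
  intro n
  simp only [coeff_C]
  split_ifs
  · exact h
  · exact hasDerivAt_const z _
lemma HDP.der {F : ℝ → ℝ⟦X⟧} {F' z} (h : HDP F F' z) :
   HDP (fun y => derivative ℝ (F y)) (derivative ℝ F') z := by
  intro n
  simp only [coeff_derivative]
  exact (h (n+1)).mul_const _

lemma key (ψ0 ψ1 c c1 w z w1: ℝ) (F G R R' : ℝ⟦X⟧) 
  (hw : w = 2 * c * ψ0) (hw1 : w1 = 2 * (c1 * ψ0 + c * ψ1))
  (hF : X * G = F - C ψ0 - C c * X^2 * (F * F))
  (hR : R = C (-ψ0) + C (-ψ1) * X + (1 + C (w - 2 * z) * X^2 + (-2) * X^3) * F +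
     (C (-c) * X^2 + C c1 * X^3) * (F * F) + (-2 * X^4) * derivative ℝ F)
  (hR' : R' = C (-ψ1) + C (-((2 * z - w) * ψ0)) * X + (C (w1 - 2) * X^2 * F + 
      (1 + C (w - 2 * z) * X^2 + (-2) * X^3) * G) +
     ((C (-c1) * X^2 + C ((2 * z - w) * c) * X^3) * (F * F) + 
      (C (-c) * X^2 + C c1 * X^3) * (G * F + F * G)) + (-2 * X^4) * derivative ℝ G) :
   R = X * R' + 2 * C c * X^2 * F * R := by
  have hd := congrArg (derivative ℝ) hF
  simp only [Derivation.leibniz, map_sub, smul_eq_mul, derivative_C, derivative_X, pow_two] at hd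
  subst hw hw1
  rw [hR', hR]
  have h2 : (C (2:ℝ) : ℝ⟦X⟧) = 2 := map_ofNat C 2
  simp only [map_neg, map_sub, map_add, map_mul, h2]
  linear_combination (2 * X^4) * hd - (1 + (2 * C c * C ψ0 - 2 * C z) * X^2 +
    2 * F * (-C c * X^2 + C c1 * X^3)) * hF

section

lemma psi_smooth (I : Set ℝ) (hIopen : IsOpen I) 
    (w ψ0 : ℝ → ℝ)
    (hw_smooth : ContDiffOn ℝ (⊤ : ℕ∞) w I)
    (hψ0_smooth : ContDiffOn ℝ (⊤ : ℕ∞) ψ0 I)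
    (hψ0_ne : ∀ z ∈ I, ψ0 z ≠ 0)
    (ψ : ℕ → ℝ → ℝ)
    (hψ_zero : ψ 0 = ψ0)
    (hψ_rec : ∀ n : ℕ, ∀ z ∈ I, ψ (n + 1) z =
      deriv (ψ n) z + (w z / (2 * ψ0 z)) *
        ∑ k ∈ Finset.range n, ψ k z * ψ (n - 1 - k) z)
    (n : ℕ) : ContDiffOn ℝ (⊤ : ℕ∞) (ψ n) I := by
  induction n using Nat.strong_induction_on with
  | _ n ih =>
    cases n with
    | zero => rw [hψ_zero]; exact hψ0_smooth
    | succ n =>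
      refine ContDiffOn.congr ?_ (hψ_rec n)
      refine ContDiffOn.add ?_ (ContDiffOn.mul ?_ ?_)
      · exact (ih n (by omega)).deriv_of_isOpen hIopen (by simp)
      · refine hw_smooth.div (contDiffOn_const.mul hψ0_smooth) ?_
        intro z hz
        have := hψ0_ne z hz
        simp [this]
      · refine ContDiffOn.sum fun k hk => ?_
        have := Finset.mem_range.1 hk
        exact (ih k (by omega)).mul (ih _ (by omega))

lemma psi_rec2 (I : Set ℝ) (hIopen : IsOpen I) 
    (w ψ0 : ℝ → ℝ)
    (hw_smooth : ContDiffOn ℝ (⊤ : ℕ∞) w I)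
    (hψ0_smooth : ContDiffOn ℝ (⊤ : ℕ∞) ψ0 I)
    (hψ0_ne : ∀ z ∈ I, ψ0 z ≠ 0)
    (α : ℝ)
    (hL1 : ∀ z ∈ I, 2 * w z * deriv ψ0 z - deriv w z * ψ0 z - 4 * α * ψ0 z = 0)
    (hL2 : ∀ z ∈ I, deriv (deriv ψ0) z + (w z - 2 * z) * ψ0 z = 0)
    (ψ : ℕ → ℝ → ℝ)
    (hψ_zero : ψ 0 = ψ0)
    (hψ_rec : ∀ n : ℕ, ∀ z ∈ I, ψ (n + 1) z =
      deriv (ψ n) z + (w z / (2 * ψ0 z)) *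
        ∑ k ∈ Finset.range n, ψ k z * ψ (n - 1 - k) z)
    (z : ℝ) (hz : z ∈ I) : ∃ c1 : ℝ, ∀ n : ℕ, ψ (n + 2) z =
    (2 * z - w z) * ψ n z + 2 * n * ψ (n - 1) z
      + (w z / (2 * ψ0 z)) * ∑ k ∈ Finset.range (n + 1), ψ k z * ψ (n - k) z
      - c1 * ∑ k ∈ Finset.range n, ψ k z * ψ (n - 1 - k) z := by
  have hs := psi_smooth I hIopen w ψ0 hw_smooth hψ0_smooth hψ0_ne ψ hψ_zero hψ_rec
  have hdiff : ∀ f : ℝ → ℝ, ContDiffOn ℝ (⊤ : ℕ∞) f I → ∀ z ∈ I, HasDerivAt f (deriv f z) z := by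
    intro f hf z hz
    exact ((hf.differentiableOn (by simp)).differentiableAt (hIopen.mem_nhds hz)).hasDerivAt
  have hψ' := fun n => hdiff _ (hs n)
  have hψ0' := hdiff _ hψ0_smooth
  have hψ0'' := hdiff (deriv ψ0) (hψ0_smooth.deriv_of_isOpen hIopen (by simp))
  have hw' := hdiff _ hw_smooth
  set c : ℝ → ℝ := fun z => w z / (2 * ψ0 z) with hc
  set c1 : ℝ → ℝ := fun z => c z * deriv ψ0 z / ψ0 z - 2 * α / ψ0 z with hc1
  have hwc : ∀ z ∈ I, w z = 2 * c z * ψ0 z := by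
    intro z hz
    have := hψ0_ne z hz
    simp only [hc]; field_simp
  have hw1 : ∀ z ∈ I, deriv w z = 2 * (c1 z * ψ0 z + c z * deriv ψ0 z) := by
    intro z hz
    have := hψ0_ne z hz
    have h1 := hL1 z hz
    have h2 := hwc z hz
    have h3 : deriv w z = 2 * w z * deriv ψ0 z / ψ0 z - 4 * α := by
      field_simp; linarith
    rw [h3, h2]
    simp only [hc1]; field_simp; ring
  have hc' : ∀ z ∈ I, HasDerivAt c (c1 z) z := by
    intro z hz
    have hne := hψ0_ne z hz
    refine ((hw' z hz).fun_div ((hψ0' z hz).const_mul 2) (by simp [hne])).congr_deriv ?_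
    rw [hw1 z hz, hwc z hz]
    field_simp; ring
  have hc1' : ∀ z ∈ I, HasDerivAt c1 ((2 * z - w z) * c z) z := by
    intro z hz
    have hne := hψ0_ne z hz
    refine ((((hc' z hz).fun_mul (hψ0'' z hz)).fun_div (hψ0' z hz) hne).fun_sub
      ((hasDerivAt_const z (2 * α)).fun_div (hψ0' z hz) hne)).congr_deriv ?_
    have h2 : deriv (deriv ψ0) z = (2 * z - w z) * ψ0 z := by linarith [hL2 z hz]
    rw [h2]
    simp only [hc1]
    field_simp; ring
  set F : ℝ → ℝ⟦X⟧ := fun y => PowerSeries.mk (fun n => ψ n y) with hF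
  set G : ℝ → ℝ⟦X⟧ := fun y => PowerSeries.mk (fun n => deriv (ψ n) y) with hG
  have hFG : ∀ z ∈ I, HDP F (G z) z := by
    intro z hz n
    simpa [hF, hG] using hψ' n z hz
  have hrel : ∀ z ∈ I, X * G z = F z - C (ψ0 z) - C (c z) * X^2 * (F z * F z) := by
    intro z hz
    ext n
    rw [mul_assoc]
    cases n with
    | zero => simp [hF, hψ_zero]
    | succ n =>
      rw [coeff_succ_X_mul, map_sub, map_sub, coeff_C_mul, coeff_X_pow_mul', coeff_C]
      simp only [hG, hF, coeff_mk, coeff_mul, hψ_rec n z hz]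
      cases n with
      | zero => simp
      | succ n =>
        rw [Finset.Nat.sum_antidiagonal_eq_sum_range_succ (fun a b => ψ a z * ψ b z)]
        simp [hc]
  set R : ℝ → ℝ⟦X⟧ := fun z => C (-ψ0 z) + C (-deriv ψ0 z) * X + 
     (1 + C (w z - 2 * z) * X^2 + (-2) * X^3) * F z +
     (C (-c z) * X^2 + C (c1 z) * X^3) * (F z * F z) + (-2 * X^4) * derivative ℝ (F z) with hR
  have hRd : ∀ z ∈ I, ∃ R', HDP R R' z ∧ R z = X * R' + 2 * C (c z) * X^2 * F z * R z := by
    intro z hz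
    have hlin : HasDerivAt (fun y : ℝ => w y - 2 * y) (deriv w z - 2) z := by
      simpa using (hw' z hz).fun_sub ((hasDerivAt_id z).const_mul 2)
    have hh := (((((HDP.fC (hψ0' z hz).fun_neg).add ((HDP.fC (hψ0'' z hz).fun_neg).mul (HDP.const X z))).add
      ((((HDP.const 1 z).add ((HDP.fC hlin).mul (HDP.const (X^2) z))).add 
        (HDP.const ((-2) * X^3) z)).mul (hFG z hz))).add
      ((((HDP.fC (hc' z hz).fun_neg).mul (HDP.const (X^2) z)).add
        ((HDP.fC (hc1' z hz)).mul (HDP.const (X^3) z))).mul ((hFG z hz).mul (hFG z hz)))).add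
      ((HDP.const (-2 * X^4) z).mul (hFG z hz).der))
    refine ⟨_, hh, ?_⟩
    have h2 : deriv (deriv ψ0) z = (2 * z - w z) * ψ0 z := by linarith [hL2 z hz]
    refine key (ψ0 z) (deriv ψ0 z) (c z) (c1 z) (w z) z (deriv w z) (F z) (G z) _ _ (hwc z hz)
      (hw1 z hz) (hrel z hz) rfl ?_
    rw [h2]
    ring
  have hR0 : ∀ n, ∀ z ∈ I, coeff n (R z) = 0 := by
    intro n
    induction n using Nat.strong_induction_on with
    | _ n ih =>
      intro z hz
      obtain ⟨R', h1, h2⟩ := hRd z hz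
      rw [h2, map_add]
      have e1 : coeff n (X * R') = 0 := by
        cases n with
        | zero => simp
        | succ n =>
          rw [coeff_succ_X_mul]
          refine (h1 n).unique ((hasDerivAt_const z (0:ℝ)).congr_of_eventuallyEq ?_)
          filter_upwards [hIopen.mem_nhds hz] with y hy
          exact ih n (by omega) y hy
      have e2 : 2 * C (c z) * X^2 * F z * R z = X^2 * ((2 * C (c z) * F z) * R z) := by ring
      rw [e1, e2, coeff_X_pow_mul', zero_add]
      split_ifs
      · rw [coeff_mul]
        refine Finset.sum_eq_zero fun p hp => ?_
        have := Finset.HasAntidiagonal.mem_antidiagonal.1 hp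
        rw [ih p.2 (by omega) z hz, mul_zero]
      · rfl
  refine ⟨c1 z, fun n => ?_⟩
  have h := hR0 (n+2) z hz
  have e : R z = C (-ψ0 z) + C (-deriv ψ0 z) * X + F z + C (w z - 2 * z) * (X^2 * F z) + 
     C (-2) * (X^3 * F z) + C (-c z) * (X^2 * (F z * F z)) + C (c1 z) * (X^3 * (F z * F z)) + 
      C (-2) * (X^4 * derivative ℝ (F z)) := by
    have h2 : (C (2:ℝ) : ℝ⟦X⟧) = 2 := map_ofNat C 2
    simp only [hR, map_neg, h2]
    ring
  rw [e] at h
  simp only [map_add, coeff_C_mul, coeff_X_pow_mul', coeff_C, coeff_X] at h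
  have hS : ∀ m, coeff m (F z * F z) = ∑ k ∈ Finset.range (m + 1), ψ k z * ψ (m - k) z := by
    intro m
    rw [coeff_mul, Finset.Nat.sum_antidiagonal_eq_sum_range_succ (fun a b => coeff a (F z) * coeff b (F z))]
    simp [hF]
  simp only [hS, coeff_derivative] at h
  simp only [hF, coeff_mk] at h
  rcases n with _ | _ | n
  · simp at h ⊢
    simp only [hc] at h; linarith
  · simp at h ⊢
    simp only [hc] at h; linarith
  · simp at h ⊢
    simp only [hc] at h
    have : n + 1 + 1 + 2 - 4 + 1 = n + 1 := by omega
    linarith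
end

end

section
open Matrix

lemma sum_updateCol {N : ℕ} (H M : Matrix (Fin N) (Fin N) ℝ) :
    ∑ j, (H.updateCol j (fun i => M i j)).det = (H.adjugate * M).trace := by
  simp only [← Matrix.cramer_apply, Matrix.cramer_eq_adjugate_mulVec, Matrix.trace, Matrix.diag,
    Matrix.mul_apply, Matrix.mulVec, dotProduct]

lemma trace_adj {N : ℕ} (H L U M : Matrix (Fin N) (Fin N) ℝ) (a : ℝ) (h : M = a • H + L * H + H * U) :
    (H.adjugate * M).trace = (N * a + L.trace + U.trace) * H.det := by
  have h1 : (H.adjugate * (L * H)).trace = H.det * L.trace := by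
    rw [← Matrix.mul_assoc, Matrix.trace_mul_comm, ← Matrix.mul_assoc, Matrix.mul_adjugate]
    simp
  rw [h, Matrix.mul_add, Matrix.mul_add, Matrix.trace_add, Matrix.trace_add, h1, ← Matrix.mul_assoc,
    Matrix.adjugate_mul, Matrix.mul_smul, Matrix.adjugate_mul]
  simp
  ring

lemma sum_shift (p : ℕ → ℝ) (M : ℕ) :
    ∑ j : Fin (M+2), ((Matrix.of fun i j : Fin (M+2) => p ((i:ℕ) + j)).updateCol j
        (fun i => p (i + j + 2))).det =
    (Matrix.of fun i j : Fin (M+2) => p ((i:ℕ) + if (j : ℕ) = M + 1 then M + 3 else (j : ℕ))).det -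
    (Matrix.of fun i j : Fin (M+2) => p ((i:ℕ) + if M ≤ (j : ℕ) then (j : ℕ) + 1 else (j : ℕ))).det := by
  rw [Fin.sum_univ_castSucc, Fin.sum_univ_castSucc, Finset.sum_eq_zero, zero_add, add_comm,
    sub_eq_add_neg]
  · congr 1
    · congr 1
      ext i j
      simp only [Matrix.updateCol_apply, Matrix.of_apply, Fin.ext_iff, Fin.val_last]
      split_ifs with h
      · congr 1
      · rfl
    · have hne : (Fin.last M).castSucc ≠ Fin.last (M+1) := by simp [Fin.ext_iff]
      have := Matrix.det_permute' (Equiv.swap (Fin.last M).castSucc (Fin.last (M+1))) 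
        (Matrix.of fun i j : Fin (M+2) => p ((i:ℕ) + if M ≤ (j : ℕ) then (j : ℕ) + 1 else (j : ℕ)))
      rw [Equiv.Perm.sign_swap hne] at this
      simp only [Units.val_neg, Units.val_one, Int.cast_neg, Int.cast_one, neg_mul, one_mul] at this
      rw [← this]
      congr 1
      ext i j
      simp only [Matrix.updateCol_apply, Matrix.of_apply, Matrix.submatrix_apply, id]
      by_cases h1 : j = (Fin.last M).castSucc
      · subst h1
        simp [add_assoc]
      · by_cases h2 : j = Fin.last (M+1)
        · subst h2
          simp [hne.symm]
        · rw [Equiv.swap_apply_of_ne_of_ne h1 h2, if_neg h1, if_neg]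
          simp only [Fin.ext_iff, Fin.val_castSucc, Fin.val_last] at h1 h2
          omega
  · intro j _
    refine Matrix.det_zero_of_column_eq (i := j.castSucc.castSucc) (j := ⟨j + 2, by omega⟩) ?_ ?_
    · simp [Fin.ext_iff]
    · intro k
      simp [Fin.ext_iff, add_assoc]

lemma fin_sum (N i : ℕ) (hi : i ≤ N) (f : ℕ → ℝ) :
    ∑ k : Fin N, (if (k:ℕ) < i then f k else 0) = ∑ k ∈ Finset.range i, f k := by
  rw [Fin.sum_univ_eq_sum_range (fun k => if k < i then f k else 0), ← Finset.sum_filter]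
  congr 1
  ext k; simp; omega

/-- lower factor -/
def Lm (p : ℕ → ℝ) (c c1 : ℝ) (N : ℕ) : Matrix (Fin N) (Fin N) ℝ := Matrix.of fun i k =>
  (if (k:ℕ) < i then (if (k:ℕ) + 1 = i then 2 * (i:ℝ) else 0) - c1 * p (i - 1 - k) else 0)
   + (if (k:ℕ) < i + 1 then c * p (i - k) else 0)

/-- upper factor -/
def Um (p : ℕ → ℝ) (c c1 : ℝ) (N : ℕ) : Matrix (Fin N) (Fin N) ℝ := Matrix.of fun k j =>
  (if (k:ℕ) < j then (if (k:ℕ) + 1 = j then 2 * (j:ℝ) else 0) - c1 * p (j - 1 - k) else 0)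
   + (if (k:ℕ) < j + 1 then (if (k:ℕ) = 0 then 0 else c * p (j - k)) else 0)

lemma trL (p : ℕ → ℝ) (c c1 : ℝ) (N : ℕ) : (Lm p c c1 N).trace = N * (c * p 0) := by
  simp [Lm, Matrix.trace]

lemma trU (p : ℕ → ℝ) (c c1 : ℝ) (N : ℕ) : (Um p c c1 (N+1)).trace = N * (c * p 0) := by
  simp [Um, Matrix.trace, Fin.sum_univ_succ]

lemma sum_split (i j : ℕ) (p : ℕ → ℝ) : ∑ k ∈ Finset.range (i + j), p k * p (i + j - 1 - k) =
    ∑ k ∈ Finset.range i, p (i - 1 - k) * p (k + j) + ∑ k ∈ Finset.range j, p (i + k) * p (j - 1 - k) := by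
  rw [Finset.sum_range_add]
  congr 1
  · rw [← Finset.sum_range_reflect]
    refine Finset.sum_congr rfl fun k hk => ?_
    have := Finset.mem_range.1 hk
    congr 2; omega
  · refine Finset.sum_congr rfl fun k hk => ?_
    have := Finset.mem_range.1 hk
    congr 2; omega

lemma sum_one (i j : ℕ) (p : ℕ → ℝ) :
    ∑ k ∈ Finset.range i, (if k + 1 = i then 2 * (i:ℝ) else 0) * p (k + j) = 2 * i * p (i + j - 1) := by
  cases i with
  | zero => simp
  | succ i =>
    rw [Finset.sum_range_succ, Finset.sum_eq_zero]
    · simp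
    · intro k hk
      have := Finset.mem_range.1 hk
      rw [if_neg (by omega), zero_mul]

lemma H2_eq (p : ℕ → ℝ) (c c1 a : ℝ) (N : ℕ)
    (h : ∀ n : ℕ, p (n + 2) = a * p n + 2 * n * p (n - 1) + c * ∑ k ∈ Finset.range (n + 1), p k * p (n - k)
      - c1 * ∑ k ∈ Finset.range n, p k * p (n - 1 - k)) :
    (Matrix.of fun i j : Fin N => p ((i:ℕ) + j + 2)) = 
      a • (Matrix.of fun i j : Fin N => p ((i:ℕ) + j)) + Lm p c c1 N * (Matrix.of fun i j : Fin N => p ((i:ℕ) + j))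
       + (Matrix.of fun i j : Fin N => p ((i:ℕ) + j)) * Um p c c1 N := by
  ext i j
  have hi := i.2
  have hj := j.2
  simp only [Matrix.add_apply, Matrix.smul_apply, Matrix.mul_apply, Lm, Um, Matrix.of_apply, add_mul, mul_add,
    ite_mul, mul_ite, zero_mul, mul_zero, Finset.sum_add_distrib, smul_eq_mul]
  rw [fin_sum N i hi.le (fun k => ((if (k:ℕ) + 1 = i then 2 * (i:ℝ) else 0) - c1 * p (i - 1 - k)) * p (k + j)),
    fin_sum N (i+1) hi (fun k => c * p (i - k) * p (k + j)),
    fin_sum N j hj.le (fun k => p (i + k) * ((if (k:ℕ) + 1 = j then 2 * (j:ℝ) else 0) - c1 * p (j - 1 - k))),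
    fin_sum N (j+1) hj (fun k => if (k:ℕ) = 0 then 0 else p (i + k) * (c * p (j - k)))]
  rw [h, sum_split i j]
  have e1 := sum_split (i+1) j p
  have e2 : (i:ℕ) + 1 + j = i + j + 1 := by omega
  simp only [e2, Nat.add_sub_cancel] at e1
  rw [e1]
  simp only [sub_mul, mul_sub, Finset.sum_sub_distrib, sum_one]
  have e3 := sum_one j i p
  rw [Finset.sum_range_succ' _ (j:ℕ)]
  simp only [mul_comm (p (_ + _))]
  simp only [add_comm _ (i:ℕ)] at e3
  simp only [e3, mul_assoc, ← Finset.mul_sum]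
  simp only [Nat.succ_ne_zero, if_true, if_false, ← Finset.mul_sum, add_assoc, add_comm 1, Nat.sub_sub]
  push_cast
  ring

end

/-- Differential formula (A.3): `τ_N[0,…,N-2,N+1] - τ_N[0,…,N-3,N-1,N] = (-w/2 + 2Nz) τ_N`. -/
theorem tau_shift_second_deriv_diff
    (I : Set ℝ) (hIopen : IsOpen I) (hIconn : I.OrdConnected)
    (w ψ0 : ℝ → ℝ)
    (hw_smooth : ContDiffOn ℝ (⊤ : ℕ∞) w I)
    (hψ0_smooth : ContDiffOn ℝ (⊤ : ℕ∞) ψ0 I)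
    (hψ0_ne : ∀ z ∈ I, ψ0 z ≠ 0)
    (α : ℝ)
    (hL1 : ∀ z ∈ I, 2 * w z * deriv ψ0 z - deriv w z * ψ0 z - 4 * α * ψ0 z = 0)
    (hL2 : ∀ z ∈ I, deriv (deriv ψ0) z + (w z - 2 * z) * ψ0 z = 0)
    (ψ : ℕ → ℝ → ℝ)
    (hψ_zero : ψ 0 = ψ0)
    (hψ_rec : ∀ n : ℕ, ∀ z ∈ I, ψ (n + 1) z =
      deriv (ψ n) z + (w z / (2 * ψ0 z)) *
        ∑ k ∈ Finset.range n, ψ k z * ψ (n - 1 - k) z)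
    (N : ℕ) (hN : 2 ≤ N) :
    ∀ z ∈ I,
      tauShift ψ N (fun j => if (j : ℕ) = N - 1 then N + 1 else (j : ℕ)) z
        - tauShift ψ N (fun j => if N - 2 ≤ (j : ℕ) then (j : ℕ) + 1 else (j : ℕ)) z
      = (-(w z) / 2 + 2 * (N : ℝ) * z) * tauShift ψ N (fun j => (j : ℕ)) z := by
  intro z hz
  obtain ⟨M, rfl⟩ : ∃ M, N = M + 2 := ⟨N - 2, by omega⟩
  obtain ⟨c1, h⟩ := psi_rec2 I hIopen w ψ0 hw_smooth hψ0_smooth hψ0_ne α hL1 hL2 ψ hψ_zero hψ_rec z hz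
  have h1 := sum_shift (fun n => ψ n z) M
  have h2 := trace_adj _ _ _ _ _ (H2_eq (fun n => ψ n z) _ _ _ (M+2) h)
  rw [← sum_updateCol, trL, trU] at h2
  simp only [Matrix.of_apply] at h2
  rw [h1] at h2
  have hne := hψ0_ne z hz
  have e : w z / (2 * ψ0 z) * ψ 0 z = w z / 2 := by
    rw [hψ_zero]; field_simp
  rw [e] at h2
  unfold tauShift
  refine h2.trans ?_
  push_cast
  ring
end

section
/- Let w be a smooth function on an open interval I ⊆ ℝ and let ψ_0 be a nowhere-vanishing smooth function on I satisfying (L1) and (L2) with w and a parameter α; define the sequence ψ_n by the recursion. Then for every N ≥ 3, the identity τ_N[0,…,N−2,N+2] + 2·τ_N[0,…,N−3,N−1,N+1] + τ_N[0,…,N−4,N−2,N−1,N] = τ_N''' + (3/2)·w·τ_N' + (1/2)·w'·τ_N holds on I. -/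
namespace TauAux

open Finset Matrix

theorem hasDerivAt_det {n : ℕ} (A : ℝ → Matrix (Fin n) (Fin n) ℝ) (B : Matrix (Fin n) (Fin n) ℝ)
    (z : ℝ) (h : ∀ i j, HasDerivAt (fun t => A t i j) (B i j) z) :
    HasDerivAt (fun t => (A t).det) (∑ j, cramer (A z) (fun i => B i j) j) z := by
  have h1 : HasDerivAt (fun t => ∑ σ : Equiv.Perm (Fin n),
      ((Equiv.Perm.sign σ : ℤ) : ℝ) * ∏ i, A t (σ i) i)
      (∑ σ : Equiv.Perm (Fin n), ((Equiv.Perm.sign σ : ℤ) : ℝ) *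
        ∑ j, (∏ i ∈ univ.erase j, A z (σ i) i) * B (σ j) j) z := by
    apply HasDerivAt.fun_sum
    intro σ _
    apply HasDerivAt.const_mul
    have := HasDerivAt.fun_finsetProd (u := univ) (f := fun i t => A t (σ i) i)
      (f' := fun i => B (σ i) i) (x := z) (fun i _ => h (σ i) i)
    simpa [smul_eq_mul] using this
  have h2 : (fun t => (A t).det) = (fun t => ∑ σ : Equiv.Perm (Fin n),
      ((Equiv.Perm.sign σ : ℤ) : ℝ) * ∏ i, A t (σ i) i) := by
    funext t
    exact det_apply' _
  rw [h2]
  convert h1 using 1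
  simp only [cramer_apply, det_apply', mul_sum]
  rw [sum_comm]
  refine sum_congr rfl fun σ _ => sum_congr rfl fun j _ => ?_
  congr 1
  rw [← mul_prod_erase univ _ (mem_univ j), mul_comm]
  congr 1
  · refine prod_congr rfl fun i hi => ?_
    rw [updateCol_ne (ne_of_mem_erase hi)]
  · simp

theorem sum_cramer_mul {n : ℕ} (L A : Matrix (Fin n) (Fin n) ℝ) :
    ∑ j, cramer A (fun i => (L * A) i j) j = L.trace * A.det := by
  have h : ∀ j, cramer A (fun i => (L * A) i j) j = (adjugate A * (L * A)) j j := by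
    intro j
    rw [cramer_eq_adjugate_mulVec]
    rfl
  simp only [h]
  change trace (adjugate A * (L * A)) = _
  rw [trace_mul_comm, Matrix.mul_assoc, mul_adjugate]
  simp [mul_comm]

theorem conv_split (u : ℕ → ℝ) (i c : ℕ) :
    ∑ k ∈ range (i + c), u k * u (i + c - 1 - k) =
      ∑ k ∈ range i, u k * u (i - 1 - k + c) + ∑ l ∈ range c, u l * u (i + (c - 1 - l)) := by
  rw [sum_range_add]
  congr 1
  · refine sum_congr rfl fun k hk => ?_
    have := mem_range.1 hk
    congr 2; omega
  · rw [← sum_range_reflect]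
    refine sum_congr rfl fun k hk => ?_
    have := mem_range.1 hk
    rw [mul_comm]
    congr 2 <;> omega

/-- Strictly lower triangular Toeplitz matrix. -/
def toep (u : ℕ → ℝ) (n : ℕ) : Matrix (Fin n) (Fin n) ℝ :=
  Matrix.of fun i m => if (m : ℕ) < i then u (i - 1 - m) else 0

theorem toep_trace (u : ℕ → ℝ) (n : ℕ) : (toep u n).trace = 0 := by
  simp [toep, trace]

theorem toep_mul (u : ℕ → ℝ) (n : ℕ) (c : Fin n → ℕ) (i j : Fin n) :
    (toep u n * Matrix.of fun i j : Fin n => u ((i : ℕ) + c j)) i j =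
      ∑ k ∈ range i, u k * u (i - 1 - k + c j) := by
  rw [Matrix.mul_apply]
  simp only [toep, Matrix.of_apply]
  rw [Fin.sum_univ_eq_sum_range (fun m => (if m < (i : ℕ) then u (i - 1 - m) else 0) * u (m + c j)) n]
  rw [← sum_subset (range_subset_range.2 i.2.le)]
  · rw [← sum_range_reflect]
    refine sum_congr rfl fun k hk => ?_
    have := mem_range.1 hk
    rw [if_pos (by omega)]
    congr 2
    omega
  · intro m _ hm
    rw [if_neg (by simpa using hm), zero_mul]

theorem cramer_tau (ψ : ℕ → ℝ → ℝ) (N : ℕ) (c : Fin N → ℕ) (z : ℝ) (j : Fin N) (m : ℕ) :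
    cramer (Matrix.of fun i j : Fin N => ψ ((i : ℕ) + c j) z) (fun i => ψ ((i : ℕ) + m) z) j
      = tauShift ψ N (Function.update c j m) z := by
  rw [cramer_apply, tauShift]
  congr 1
  ext i k
  by_cases h : k = j
  · subst h; simp
  · simp [h]

theorem tau_hasDerivAt (ψ : ℕ → ℝ → ℝ) (γ : ℝ) (z : ℝ)
    (h : ∀ n, HasDerivAt (ψ n) (ψ (n + 1) z - γ * ∑ k ∈ range n, ψ k z * ψ (n - 1 - k) z) z)
    (N : ℕ) (c : Fin N → ℕ) :
    HasDerivAt (tauShift ψ N c)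
      (∑ j, (tauShift ψ N (Function.update c j (c j + 1)) z
        - γ * ∑ l ∈ range (c j), ψ l z * tauShift ψ N (Function.update c j (c j - 1 - l)) z)) z := by
  have h1 := hasDerivAt_det (fun t => Matrix.of fun i j : Fin N => ψ ((i : ℕ) + c j) t)
    (Matrix.of fun i j : Fin N => ψ ((i : ℕ) + c j + 1) z -
      γ * ∑ k ∈ range ((i : ℕ) + c j), ψ k z * ψ ((i : ℕ) + c j - 1 - k) z) z
    (fun i j => h _)
  have h2 := sum_cramer_mul (toep (fun n => ψ n z) N)
    (Matrix.of fun i j : Fin N => ψ ((i : ℕ) + c j) z)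
  rw [toep_trace, zero_mul] at h2
  refine HasDerivAt.congr_deriv (f := tauShift ψ N c) h1 (Eq.symm ?_)
  have h3 : ∀ j : Fin N, (fun i : Fin N => (Matrix.of fun i j : Fin N => ψ ((i : ℕ) + c j + 1) z -
      γ * ∑ k ∈ range ((i : ℕ) + c j), ψ k z * ψ ((i : ℕ) + c j - 1 - k) z) i j) =
      (fun i : Fin N => ψ ((i : ℕ) + (c j + 1)) z)
      - γ • (fun i : Fin N => (toep (fun n => ψ n z) N *
          (Matrix.of fun i j : Fin N => ψ ((i : ℕ) + c j) z)) i j)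
      - γ • ∑ l ∈ range (c j), ψ l z • (fun i : Fin N => ψ ((i : ℕ) + (c j - 1 - l)) z) := by
    intro j
    funext i
    have := toep_mul (fun n => ψ n z) N c i j
    simp only [Pi.sub_apply, Pi.smul_apply, Finset.sum_apply, smul_eq_mul, Matrix.of_apply]
    rw [this, conv_split (fun n => ψ n z)]
    simp only [add_assoc]
    ring
  have key : ∀ j : Fin N, cramer (Matrix.of fun i j : Fin N => ψ ((i : ℕ) + c j) z)
      (fun i : Fin N => (Matrix.of fun i j : Fin N => ψ ((i : ℕ) + c j + 1) z -
      γ * ∑ k ∈ range ((i : ℕ) + c j), ψ k z * ψ ((i : ℕ) + c j - 1 - k) z) i j) j =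
      tauShift ψ N (Function.update c j (c j + 1)) z
      - γ * cramer (Matrix.of fun i j : Fin N => ψ ((i : ℕ) + c j) z)
          (fun i : Fin N => (toep (fun n => ψ n z) N *
          (Matrix.of fun i j : Fin N => ψ ((i : ℕ) + c j) z)) i j) j
      - γ * ∑ l ∈ range (c j), ψ l z * tauShift ψ N (Function.update c j (c j - 1 - l)) z := by
    intro j
    rw [h3 j]
    simp only [map_sub, map_smul, map_sum, Pi.sub_apply, Pi.smul_apply, Finset.sum_apply,
      smul_eq_mul, cramer_tau]
  refine Eq.trans ?_ (sum_congr rfl fun j _ => (key j).symm)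
  rw [sum_sub_distrib, sum_sub_distrib, sum_sub_distrib, ← mul_sum (univ) _ γ,
    ← mul_sum (univ) _ γ, h2]
  simp

/-- The offsets `0, …, M-1, a, b, d`. -/
def off (M a b d : ℕ) (j : Fin (M + 3)) : ℕ :=
  if (j : ℕ) < M then j else if (j : ℕ) = M then a else if (j : ℕ) = M + 1 then b else d

theorem tau_zero (ψ : ℕ → ℝ → ℝ) (N : ℕ) (c : Fin N → ℕ) (z : ℝ) (i j : Fin N) (hij : i ≠ j)
    (h : c i = c j) : tauShift ψ N c z = 0 := by
  rw [tauShift]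
  exact det_zero_of_column_eq hij (fun k => by simp [h])

theorem T_ab (ψ : ℕ → ℝ → ℝ) (M a d : ℕ) (z : ℝ) : tauShift ψ (M + 3) (off M a a d) z = 0 :=
  tau_zero _ _ _ _ ⟨M, by omega⟩ ⟨M + 1, by omega⟩ (by simp) (by simp [off])

theorem T_ad (ψ : ℕ → ℝ → ℝ) (M a b : ℕ) (z : ℝ) : tauShift ψ (M + 3) (off M a b a) z = 0 :=
  tau_zero _ _ _ _ ⟨M, by omega⟩ ⟨M + 2, by omega⟩ (by simp) (by simp [off])

theorem T_bd (ψ : ℕ → ℝ → ℝ) (M a b : ℕ) (z : ℝ) : tauShift ψ (M + 3) (off M a b b) z = 0 :=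
  tau_zero _ _ _ _ ⟨M + 1, by omega⟩ ⟨M + 2, by omega⟩ (by simp) (by simp [off])

theorem T_a (ψ : ℕ → ℝ → ℝ) (M a b d : ℕ) (z : ℝ) (h : a < M) :
    tauShift ψ (M + 3) (off M a b d) z = 0 :=
  tau_zero _ _ _ _ ⟨a, by omega⟩ ⟨M, by omega⟩ (by simp; omega) (by simp [off, h])

theorem T_b (ψ : ℕ → ℝ → ℝ) (M a b d : ℕ) (z : ℝ) (h : b < M) :
    tauShift ψ (M + 3) (off M a b d) z = 0 :=
  tau_zero _ _ _ _ ⟨b, by omega⟩ ⟨M + 1, by omega⟩ (by simp; omega) (by simp [off, h])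

theorem T_d (ψ : ℕ → ℝ → ℝ) (M a b d : ℕ) (z : ℝ) (h : d < M) :
    tauShift ψ (M + 3) (off M a b d) z = 0 :=
  tau_zero _ _ _ _ ⟨d, by omega⟩ ⟨M + 2, by omega⟩ (by simp; omega) (by simp [off, h])

theorem T_swap (ψ : ℕ → ℝ → ℝ) (M a b d : ℕ) (z : ℝ) :
    tauShift ψ (M + 3) (off M a b d) z = - tauShift ψ (M + 3) (off M a d b) z := by
  have hne : (⟨M + 1, by omega⟩ : Fin (M + 3)) ≠ ⟨M + 2, by omega⟩ := by simp
  have := det_permute' (Equiv.swap (⟨M + 1, by omega⟩ : Fin (M + 3)) ⟨M + 2, by omega⟩)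
    (Matrix.of fun i j : Fin (M + 3) => ψ ((i : ℕ) + off M a d b j) z)
  rw [Equiv.Perm.sign_swap hne] at this
  simp only [Units.val_neg, Units.val_one, Int.cast_neg, Int.cast_one, neg_one_mul] at this
  rw [tauShift, tauShift, ← this]
  congr 1
  ext i j
  simp only [submatrix_apply, of_apply, id]
  congr 2
  by_cases h1 : j = ⟨M + 1, by omega⟩
  · subst h1
    rw [Equiv.swap_apply_left]; simp [off]
  by_cases h2 : j = ⟨M + 2, by omega⟩
  · subst h2
    rw [Equiv.swap_apply_right]; simp [off]
  rw [Equiv.swap_apply_of_ne_of_ne h1 h2]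
  have := j.2
  simp only [Fin.ext_iff] at h1 h2
  simp only [off]
  split_ifs <;> first | rfl | omega

theorem T_hasDerivAt (ψ : ℕ → ℝ → ℝ) (γ : ℝ) (z : ℝ)
    (h : ∀ n, HasDerivAt (ψ n) (ψ (n + 1) z - γ * ∑ k ∈ range n, ψ k z * ψ (n - 1 - k) z) z)
    (M b d : ℕ) :
    HasDerivAt (tauShift ψ (M + 3) (off M M b d))
      (tauShift ψ (M + 3) (off M (M + 1) b d) z + tauShift ψ (M + 3) (off M M (b + 1) d) z
        + tauShift ψ (M + 3) (off M M b (d + 1)) z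
        - γ * (∑ l ∈ range b, ψ l z * tauShift ψ (M + 3) (off M M (b - 1 - l) d) z
          + ∑ l ∈ range d, ψ l z * tauShift ψ (M + 3) (off M M b (d - 1 - l)) z)) z := by
  have h1 := tau_hasDerivAt ψ γ z h (M + 3) (off M M b d)
  convert h1 using 1
  rw [Fin.sum_univ_castSucc, Fin.sum_univ_castSucc, Fin.sum_univ_castSucc]
  rw [sum_eq_zero (s := (univ : Finset (Fin M)))]
  · have e1 : ∀ m, Function.update (off M M b d) (Fin.castSucc (Fin.castSucc (Fin.last M))) m
        = off M m b d := by
      intro m; funext j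
      have := j.2
      simp only [Function.update_apply, off, Fin.ext_iff, Fin.val_castSucc, Fin.val_last]
      split_ifs <;> first | rfl | omega
    have e2 : ∀ m, Function.update (off M M b d) (Fin.castSucc (Fin.last (M + 1))) m
        = off M M m d := by
      intro m; funext j
      have := j.2
      simp only [Function.update_apply, off, Fin.ext_iff, Fin.val_castSucc, Fin.val_last]
      split_ifs <;> first | rfl | omega
    have e3 : ∀ m, Function.update (off M M b d) (Fin.last (M + 2)) m
        = off M M b m := by
      intro m; funext j
      have := j.2
      simp only [Function.update_apply, off, Fin.ext_iff, Fin.val_last]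
      split_ifs <;> first | rfl | omega
    have v1 : off M M b d (Fin.castSucc (Fin.castSucc (Fin.last M))) = M := by simp [off]
    have v2 : off M M b d (Fin.castSucc (Fin.last (M + 1))) = b := by simp [off]
    have v3 : off M M b d (Fin.last (M + 2)) = d := by simp [off]
    simp only [e1, e2, e3, v1, v2, v3]
    rw [sum_eq_zero (s := range M)]
    · ring
    · intro l hl
      have := mem_range.1 hl
      rw [T_a _ _ _ _ _ _ (by omega), mul_zero]
  · intro j _
    have hj := j.2
    have v : off M M b d j.castSucc.castSucc.castSucc = j := by simp [off]
    rw [v, sum_eq_zero]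
    · rw [tau_zero _ _ _ _ j.castSucc.castSucc.castSucc ⟨j + 1, by omega⟩]
      · simp
      · simp [Fin.ext_iff]
      · simp only [Function.update_apply, off, Fin.ext_iff, Fin.val_castSucc]
        split_ifs <;> omega
    · intro l hl
      have := mem_range.1 hl
      rw [tau_zero _ _ _ _ j.castSucc.castSucc.castSucc ⟨j - 1 - l, by omega⟩]
      · simp
      · simp [Fin.ext_iff]; omega
      · simp only [Function.update_apply, off, Fin.ext_iff, Fin.val_castSucc]
        split_ifs <;> omega

theorem T_low (ψ : ℕ → ℝ → ℝ) (z : ℝ) (M b d l : ℕ) (hb : b ≤ M + 1) (hl : l < b) :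
    ψ l z * tauShift ψ (M + 3) (off M M (b - 1 - l) d) z = 0 := by
  by_cases e : b - 1 - l < M
  · rw [T_b _ _ _ _ _ _ e, mul_zero]
  · rw [show b - 1 - l = M by omega, T_ab, mul_zero]

theorem der0 (ψ : ℕ → ℝ → ℝ) (γ : ℝ) (z : ℝ)
    (h : ∀ n, HasDerivAt (ψ n) (ψ (n + 1) z - γ * ∑ k ∈ range n, ψ k z * ψ (n - 1 - k) z) z)
    (M : ℕ) :
    HasDerivAt (tauShift ψ (M + 3) (off M M (M + 1) (M + 2)))
    (tauShift ψ (M + 3) (off M M (M + 1) (M + 3)) z) z := by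
  convert T_hasDerivAt ψ γ z h M (M + 1) (M + 2) using 1
  rw [T_ab, T_bd, sum_eq_zero, sum_eq_zero]
  · ring
  · intro l hl
    have := mem_range.1 hl
    rcases l with _ | _ | l
    · rw [show M + 2 - 1 - 0 = M + 1 by omega, T_bd, mul_zero]
    · rw [show M + 2 - 1 - (0 + 1) = M by omega, T_ad, mul_zero]
    · rw [T_d _ _ _ _ _ _ (by omega), mul_zero]
  · intro l hl
    exact T_low ψ z M _ _ l le_rfl (mem_range.1 hl)

theorem der1 (ψ : ℕ → ℝ → ℝ) (γ : ℝ) (z : ℝ)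
    (h : ∀ n, HasDerivAt (ψ n) (ψ (n + 1) z - γ * ∑ k ∈ range n, ψ k z * ψ (n - 1 - k) z) z)
    (M : ℕ) :
    HasDerivAt (tauShift ψ (M + 3) (off M M (M + 1) (M + 3)))
    (tauShift ψ (M + 3) (off M M (M + 2) (M + 3)) z + tauShift ψ (M + 3) (off M M (M + 1) (M + 4)) z
      - γ * ψ 0 z * tauShift ψ (M + 3) (off M M (M + 1) (M + 2)) z) z := by
  convert T_hasDerivAt ψ γ z h M (M + 1) (M + 3) using 1
  rw [T_ab, sum_eq_zero, sum_range_succ', sum_eq_zero]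
  · simp only [Nat.sub_zero]
    rw [show M + 3 - 1 = M + 2 by omega]
    ring
  · intro l hl
    have := mem_range.1 hl
    rcases l with _ | _ | l
    · rw [show M + 3 - 1 - (0 + 1) = M + 1 by omega, T_bd, mul_zero]
    · rw [show M + 3 - 1 - (0 + 1 + 1) = M by omega, T_ad, mul_zero]
    · rw [T_d _ _ _ _ _ _ (by omega), mul_zero]
  · intro l hl
    exact T_low ψ z M _ _ l le_rfl (mem_range.1 hl)

theorem der2 (ψ : ℕ → ℝ → ℝ) (γ : ℝ) (z : ℝ)
    (h : ∀ n, HasDerivAt (ψ n) (ψ (n + 1) z - γ * ∑ k ∈ range n, ψ k z * ψ (n - 1 - k) z) z)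
    (M : ℕ) :
    HasDerivAt (tauShift ψ (M + 3) (off M M (M + 1) (M + 4)))
    (tauShift ψ (M + 3) (off M M (M + 2) (M + 4)) z + tauShift ψ (M + 3) (off M M (M + 1) (M + 5)) z
      - γ * (ψ 0 z * tauShift ψ (M + 3) (off M M (M + 1) (M + 3)) z
        + ψ 1 z * tauShift ψ (M + 3) (off M M (M + 1) (M + 2)) z)) z := by
  convert T_hasDerivAt ψ γ z h M (M + 1) (M + 4) using 1
  rw [T_ab, sum_eq_zero, sum_range_succ', sum_range_succ', sum_eq_zero]
  · simp only [Nat.sub_zero]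
    rw [show M + 4 - 1 = M + 3 by omega, show M + 3 - (0 + 1) = M + 2 by omega]
    ring
  · intro l hl
    have := mem_range.1 hl
    rcases l with _ | _ | l
    · rw [show M + 4 - 1 - (0 + 1 + 1) = M + 1 by omega, T_bd, mul_zero]
    · rw [show M + 4 - 1 - (0 + 1 + 1 + 1) = M by omega, T_ad, mul_zero]
    · rw [T_d _ _ _ _ _ _ (by omega), mul_zero]
  · intro l hl
    exact T_low ψ z M _ _ l le_rfl (mem_range.1 hl)

theorem der11 (ψ : ℕ → ℝ → ℝ) (γ : ℝ) (z : ℝ)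
    (h : ∀ n, HasDerivAt (ψ n) (ψ (n + 1) z - γ * ∑ k ∈ range n, ψ k z * ψ (n - 1 - k) z) z)
    (M : ℕ) :
    HasDerivAt (tauShift ψ (M + 3) (off M M (M + 2) (M + 3)))
    (tauShift ψ (M + 3) (off M (M + 1) (M + 2) (M + 3)) z
      + tauShift ψ (M + 3) (off M M (M + 2) (M + 4)) z
      - γ * (ψ 0 z * tauShift ψ (M + 3) (off M M (M + 1) (M + 3)) z
        - ψ 1 z * tauShift ψ (M + 3) (off M M (M + 1) (M + 2)) z)) z := by
  convert T_hasDerivAt ψ γ z h M (M + 2) (M + 3) using 1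
  rw [T_bd, sum_range_succ', sum_eq_zero, sum_range_succ', sum_range_succ', sum_eq_zero]
  · simp only [Nat.sub_zero]
    rw [show M + 3 - 1 = M + 2 by omega, show M + 2 - (0 + 1) = M + 1 by omega, T_bd,
      T_swap ψ M M (M + 2) (M + 1)]
    ring
  · intro l hl
    have := mem_range.1 hl
    rcases l with _ | l
    · rw [show M + 3 - 1 - (0 + 1 + 1) = M by omega, T_ad, mul_zero]
    · rw [T_d _ _ _ _ _ _ (by omega), mul_zero]
  · intro l hl
    have := mem_range.1 hl
    rcases l with _ | l
    · rw [show M + 2 - 1 - (0 + 1) = M by omega, T_ab, mul_zero]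
    · rw [T_b _ _ _ _ _ _ (by omega), mul_zero]

end TauAux


/-- Differential formula (A.4): `τ_N[0,…,N-2,N+2] + 2 τ_N[0,…,N-3,N-1,N+1] + τ_N[0,…,N-4,N-2,N-1,N] = τ_N''' + (3/2) w τ_N' + (1/2) w' τ_N`. -/
theorem tau_shift_third_deriv_sum
    (I : Set ℝ) (hIopen : IsOpen I) (hIconn : I.OrdConnected)
    (w ψ0 : ℝ → ℝ)
    (hw_smooth : ContDiffOn ℝ (⊤ : ℕ∞) w I)
    (hψ0_smooth : ContDiffOn ℝ (⊤ : ℕ∞) ψ0 I)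
    (hψ0_ne : ∀ z ∈ I, ψ0 z ≠ 0)
    (α : ℝ)
    (hL1 : ∀ z ∈ I, 2 * w z * deriv ψ0 z - deriv w z * ψ0 z - 4 * α * ψ0 z = 0)
    (hL2 : ∀ z ∈ I, deriv (deriv ψ0) z + (w z - 2 * z) * ψ0 z = 0)
    (ψ : ℕ → ℝ → ℝ)
    (hψ_zero : ψ 0 = ψ0)
    (hψ_rec : ∀ n : ℕ, ∀ z ∈ I, ψ (n + 1) z =
      deriv (ψ n) z + (w z / (2 * ψ0 z)) *
        ∑ k ∈ Finset.range n, ψ k z * ψ (n - 1 - k) z)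
    (N : ℕ) (hN : 3 ≤ N) :
    ∀ z ∈ I,
      tauShift ψ N (fun j => if (j : ℕ) = N - 1 then N + 2 else (j : ℕ)) z
        + 2 * tauShift ψ N (fun j => if (j : ℕ) = N - 1 then (j : ℕ) + 2 else if (j : ℕ) = N - 2 then (j : ℕ) + 1 else (j : ℕ)) z
        + tauShift ψ N (fun j => if N - 3 ≤ (j : ℕ) then (j : ℕ) + 1 else (j : ℕ)) z
      = deriv (deriv (deriv (fun t => tauShift ψ N (fun j => (j : ℕ)) t))) z
        + (3 / 2) * w z * deriv (fun t => tauShift ψ N (fun j => (j : ℕ)) t) z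
        + (1 / 2) * deriv w z * tauShift ψ N (fun j => (j : ℕ)) z := by
  have hsm : ∀ n, ∀ m ≤ n, ContDiffOn ℝ (⊤ : ℕ∞) (ψ m) I := by
    intro n
    induction n with
    | zero => intro m hm; obtain rfl : m = 0 := by omega
              rw [hψ_zero]; exact hψ0_smooth
    | succ n ih =>
      intro m hm
      by_cases hm' : m ≤ n
      · exact ih m hm'
      obtain rfl : m = n + 1 := by omega
      refine ContDiffOn.congr ?_ (hψ_rec n)
      refine ContDiffOn.add ((ih n le_rfl).deriv_of_isOpen hIopen le_rfl) ?_
      refine ContDiffOn.mul (hw_smooth.div (contDiffOn_const.mul hψ0_smooth) ?_) ?_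
      · intro z hz
        exact mul_ne_zero two_ne_zero (hψ0_ne z hz)
      · refine ContDiffOn.sum fun k hk => ?_
        have := Finset.mem_range.1 hk
        exact (ih k (by omega)).mul (ih _ (by omega))
  have hder : ∀ z ∈ I, ∀ n, HasDerivAt (ψ n) (ψ (n + 1) z - (w z / (2 * ψ0 z)) *
      ∑ k ∈ Finset.range n, ψ k z * ψ (n - 1 - k) z) z := by
    intro z hz n
    have h1 : DifferentiableAt ℝ (ψ n) z :=
      ((hsm n n le_rfl).differentiableOn (by simp)).differentiableAt (hIopen.mem_nhds hz)
    have h2 := h1.hasDerivAt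
    rw [hψ_rec n z hz, add_sub_cancel_right]
    exact h2
  have hγ : ∀ z ∈ I, w z / (2 * ψ0 z) * ψ 0 z = w z / 2 := by
    intro z hz
    have := hψ0_ne z hz
    rw [hψ_zero]
    field_simp
  obtain ⟨M, rfl⟩ : ∃ M, N = M + 3 := ⟨N - 3, by omega⟩
  have c0 : (fun j : Fin (M + 3) => (j : ℕ)) = TauAux.off M M (M + 1) (M + 2) := by
    funext j
    have := j.2
    simp only [TauAux.off]
    split_ifs <;> omega
  have c3 : (fun j : Fin (M + 3) => if (j : ℕ) = M + 3 - 1 then M + 3 + 2 else (j : ℕ))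
      = TauAux.off M M (M + 1) (M + 5) := by
    funext j
    have := j.2
    simp only [TauAux.off]
    split_ifs <;> omega
  have c21 : (fun j : Fin (M + 3) => if (j : ℕ) = M + 3 - 1 then (j : ℕ) + 2 else
      if (j : ℕ) = M + 3 - 2 then (j : ℕ) + 1 else (j : ℕ))
      = TauAux.off M M (M + 2) (M + 4) := by
    funext j
    have := j.2
    simp only [TauAux.off]
    split_ifs <;> omega
  have c111 : (fun j : Fin (M + 3) => if M + 3 - 3 ≤ (j : ℕ) then (j : ℕ) + 1 else (j : ℕ))
      = TauAux.off M (M + 1) (M + 2) (M + 3) := by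
    funext j
    have := j.2
    simp only [TauAux.off]
    split_ifs <;> omega
  rw [c0, c3, c21, c111]
  have d1 : ∀ z ∈ I, deriv (tauShift ψ (M + 3) (TauAux.off M M (M + 1) (M + 2))) z
      = tauShift ψ (M + 3) (TauAux.off M M (M + 1) (M + 3)) z :=
    fun z hz => (TauAux.der0 ψ _ z (hder z hz) M).deriv
  have d2 : ∀ z ∈ I, deriv (deriv (tauShift ψ (M + 3) (TauAux.off M M (M + 1) (M + 2)))) z
      = tauShift ψ (M + 3) (TauAux.off M M (M + 2) (M + 3)) z
        + tauShift ψ (M + 3) (TauAux.off M M (M + 1) (M + 4)) z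
        - w z / 2 * tauShift ψ (M + 3) (TauAux.off M M (M + 1) (M + 2)) z := by
    intro z hz
    have e := Filter.eventuallyEq_of_mem (hIopen.mem_nhds hz) d1
    rw [e.deriv_eq, (TauAux.der1 ψ _ z (hder z hz) M).deriv, hγ z hz]
  intro z hz
  have hw : HasDerivAt w (deriv w z) z :=
    ((hw_smooth.differentiableOn (by simp)).differentiableAt (hIopen.mem_nhds hz)).hasDerivAt
  have e := Filter.eventuallyEq_of_mem (hIopen.mem_nhds hz) d2
  have d3 := ((TauAux.der11 ψ _ z (hder z hz) M).add (TauAux.der2 ψ _ z (hder z hz) M)).sub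
    ((hw.div_const 2).mul (TauAux.der0 ψ _ z (hder z hz) M))
  have d3' := e.deriv_eq.trans d3.deriv
  have g := hγ z hz
  change _ = deriv (deriv (deriv (tauShift ψ (M + 3) (TauAux.off M M (M + 1) (M + 2))))) z
    + 3 / 2 * w z * deriv (tauShift ψ (M + 3) (TauAux.off M M (M + 1) (M + 2))) z + _
  rw [d3', d1 z hz]
  linear_combination (2 * tauShift ψ (M + 3) (TauAux.off M M (M + 1) (M + 3)) z) * g
end

section
/- (Airy-type determinant solutions) Let f be a smooth solution of the Airy equation f'' = 2z·f on an open interval I ⊆ ℝ, and for N ≥ 0 let ρ_N = det(f^{(i+j−2)})_{1≤i,j≤N} be the N×N Wronskian determinant of f (ρ_0 = 1), where f^{(m)} denotes the m-th derivative of f. If ρ_N and ρ_{N+1} are nowhere zero on I, then u = (log(ρ_{N+1}/ρ_N))' = ρ_{N+1}'/ρ_{N+1} − ρ_N'/ρ_N is a solution of P_II[N] on I, and W = 2(log ρ_N)'' = 2(ρ_N''·ρ_N − (ρ_N')²)/ρ_N² is a solution of P_XXXIV[N] on I. -/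
/-- The `N×N` Wronskian determinant `ρ_N = det(f^{(i+j-2)})_{1≤i,j≤N}` of a function `f`
(with `ρ_0 = 1`, the determinant of the empty matrix). -/
noncomputable def airyWronskian (f : ℝ → ℝ) (N : ℕ) (z : ℝ) : ℝ :=
  Matrix.det (Matrix.of fun i j : Fin N => iteratedDeriv ((i : ℕ) + (j : ℕ)) f z)


namespace AiryDet

/-- Hankel determinant built from a derivation. -/
noncomputable def hk {K : Type*} [CommRing K] (D : K → K) (F : K) (N : ℕ) : K :=
  Matrix.det (Matrix.of fun i j : Fin N => D^[(i : ℕ) + (j : ℕ)] F)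

lemma deriv_prod {K ι : Type*} [CommRing K] [DecidableEq ι] (D : Derivation ℤ K K) (s : Finset ι)
    (g : ι → K) :
    D (∏ i ∈ s, g i) = ∑ k ∈ s, ∏ i ∈ s, if i = k then D (g i) else g i := by
  induction s using Finset.induction_on with
  | empty => simp
  | insert a s ha ih =>
    rw [Finset.prod_insert ha, Derivation.leibniz, ih, Finset.sum_insert ha, Finset.prod_insert ha]
    have h1 : ∏ x ∈ s, (if x = a then D (g x) else g x) = ∏ x ∈ s, g x := by
      apply Finset.prod_congr rfl
      intro x hx
      rw [if_neg]
      rintro rfl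
      exact ha hx
    have h2 : ∀ k ∈ s, ∏ i ∈ insert a s, (if i = k then D (g i) else g i)
        = g a * ∏ i ∈ s, (if i = k then D (g i) else g i) := by
      intro k hk
      rw [Finset.prod_insert ha, if_neg]
      rintro rfl
      exact ha hk
    rw [Finset.sum_congr rfl h2, h1, ← Finset.mul_sum]
    simp only [smul_eq_mul, if_true]
    ring

/-- derivative of a determinant, column by column -/
lemma deriv_det {K ι : Type*} [CommRing K] [DecidableEq ι] [Fintype ι] (D : Derivation ℤ K K)
    (M : Matrix ι ι K) :
    D M.det = ∑ k, Matrix.det (Matrix.of fun i j => if j = k then D (M i j) else M i j) := by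
  simp only [Matrix.det_apply]
  rw [map_sum, Finset.sum_comm]
  apply Finset.sum_congr rfl
  intro σ _
  rw [Units.smul_def, map_zsmul, deriv_prod, Finset.smul_sum]
  rfl

/-- derivative of a determinant whose columns shift -/
lemma deriv_det_shift {K : Type*} [CommRing K] (D : Derivation ℤ K K) (n : ℕ)
    (c : ℕ → Fin (n+1) → K) (hc : ∀ k i, D (c k i) = c (k+1) i) :
    D (Matrix.det (Matrix.of fun i j : Fin (n+1) => c j i)) =
      Matrix.det (Matrix.of fun i j : Fin (n+1) => c (if (j:ℕ) = n then n+1 else j) i) := by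
  rw [deriv_det, Fintype.sum_eq_single (Fin.last n)]
  · congr 1
    ext i j
    simp only [Matrix.of_apply, hc]
    by_cases h : j = Fin.last n
    · subst h; simp
    · have : (j:ℕ) ≠ n := fun h' => h (Fin.ext h')
      simp [h, this]
  · intro k hk
    have hk' : (k:ℕ) < n := Fin.val_lt_last hk
    apply Matrix.det_zero_of_column_eq (i := k) (j := ⟨k+1, by omega⟩)
    · intro h; have := congrArg Fin.val h; simp at this
    · intro i
      have : (⟨k+1, by omega⟩ : Fin (n+1)) ≠ k := by
        intro h; have := congrArg Fin.val h; simp at this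
      simp [this, hc]

lemma hk_deriv {K : Type*} [CommRing K] (D : Derivation ℤ K K) (F : K) (n : ℕ) :
    D (hk D F (n+1)) = Matrix.det (Matrix.of fun i j : Fin (n+1) =>
      (⇑D)^[(i:ℕ) + (if (j:ℕ) = n then n+1 else j)] F) := by
  rw [hk]
  exact deriv_det_shift D n (fun k i => (⇑D)^[(i:ℕ)+k] F) (by
    intro k i
    rw [← Function.iterate_succ_apply' (⇑D)]; rfl)

lemma hk_deriv2 {K : Type*} [CommRing K] (D : Derivation ℤ K K) (F : K) (n : ℕ) :
    D (D (hk D F (n+1))) = Matrix.det (Matrix.of fun i j : Fin (n+1) =>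
      (⇑D)^[(if (i:ℕ) = n then n+1 else i) + (if (j:ℕ) = n then n+1 else j)] F) := by
  rw [hk_deriv, ← Matrix.det_transpose, ← Matrix.det_transpose (Matrix.of fun i j : Fin (n+1) =>
      (⇑D)^[(if (i:ℕ) = n then n+1 else i) + (if (j:ℕ) = n then n+1 else j)] F)]
  exact deriv_det_shift D n (fun k i => (⇑D)^[k + (if (i:ℕ) = n then n+1 else i)] F) (by
    intro k i
    rw [← Function.iterate_succ_apply' (⇑D)]
    congr 2; simp only [Nat.succ_eq_add_one]; ring)

lemma bordered {K : Type*} [Field K] (n : ℕ) (H : ℕ → ℕ → K)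
    (A : Matrix (Fin n) (Fin n) K) (hA : A = Matrix.of fun i j : Fin n => H i j)
    (h0 : A.det ≠ 0) (a b : ℕ) :
    Matrix.det (Matrix.of fun i j : Fin (n+1) =>
      H (if (i:ℕ) = n then a else i) (if (j:ℕ) = n then b else j))
    = A.det * (H a b - ∑ j : Fin n, (∑ i : Fin n, H a i * A⁻¹ i j) * H j b) := by
  have : Invertible A := Matrix.invertibleOfIsUnitDet A (isUnit_iff_ne_zero.mpr h0)
  rw [← Matrix.det_submatrix_equiv_self (finSumFinEquiv (m := n) (n := 1))]
  have : (Matrix.of fun i j : Fin (n+1) =>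
      H (if (i:ℕ) = n then a else i) (if (j:ℕ) = n then b else j)).submatrix
        (finSumFinEquiv (m := n) (n := 1)) (finSumFinEquiv (m := n) (n := 1))
      = Matrix.fromBlocks A (Matrix.of fun i _ => H i b) (Matrix.of fun _ j => H a j)
        (Matrix.of fun _ _ => H a b) := by
    ext i j
    rcases i with i | i <;> rcases j with j | j <;> simp [hA, (Fin.is_lt _).ne]
  rw [this, Matrix.det_fromBlocks₁₁]
  simp [Matrix.mul_apply]

lemma bordered2 {K : Type*} [Field K] (n : ℕ) (H : ℕ → ℕ → K)
    (A : Matrix (Fin n) (Fin n) K) (hA : A = Matrix.of fun i j : Fin n => H i j)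
    (h0 : A.det ≠ 0) (S : ℕ → ℕ → K)
    (hS : S = fun a b => H a b - ∑ j : Fin n, (∑ i : Fin n, H a i * A⁻¹ i j) * H j b) :
    Matrix.det (Matrix.of fun i j : Fin (n+2) => H i j)
    = A.det * (S n n * S (n+1) (n+1) - S n (n+1) * S (n+1) n) := by
  have : Invertible A := Matrix.invertibleOfIsUnitDet A (isUnit_iff_ne_zero.mpr h0)
  rw [← Matrix.det_submatrix_equiv_self (finSumFinEquiv (m := n) (n := 2))]
  have : (Matrix.of fun i j : Fin (n+2) => H i j).submatrix
        (finSumFinEquiv (m := n) (n := 2)) (finSumFinEquiv (m := n) (n := 2))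
      = Matrix.fromBlocks A (Matrix.of fun i (k : Fin 2) => H i (n+k))
        (Matrix.of fun (k : Fin 2) j => H (n+k) j)
        (Matrix.of fun (k l : Fin 2) => H (n+k) (n+l)) := by
    ext i j
    rcases i with i | i <;> rcases j with j | j <;> simp [hA]
  rw [this, Matrix.det_fromBlocks₁₁, Matrix.det_fin_two]
  simp [Matrix.mul_apply, hS]

lemma toda {K : Type*} [Field K] (D : Derivation ℤ K K) (F : K) (n : ℕ) (h0 : hk D F n ≠ 0) :
    hk D F (n+2) * hk D F n =
      D (D (hk D F (n+1))) * hk D F (n+1) - (D (hk D F (n+1)))^2 := by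
  let H : ℕ → ℕ → K := fun i j => (⇑D)^[i+j] F
  let A : Matrix (Fin n) (Fin n) K := Matrix.of fun i j : Fin n => H i j
  have h0' : A.det ≠ 0 := h0
  have e0 : hk D F n = A.det := rfl
  let S : ℕ → ℕ → K :=
    fun a b => H a b - ∑ j : Fin n, (∑ i : Fin n, H a i * A⁻¹ i j) * H j b
  have e2 : hk D F (n+2) = A.det * (S n n * S (n+1) (n+1) - S n (n+1) * S (n+1) n) :=
    bordered2 n H A rfl h0' S rfl
  have hid : ∀ i : Fin (n+1), (if (i:ℕ) = n then n else (i:ℕ)) = i := by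
    intro i; split_ifs with h <;> simp [h]
  have e1 : hk D F (n+1) = A.det * S n n := by
    rw [← bordered n H A rfl h0' n n]
    simp only [hid]; rfl
  have e3 : D (hk D F (n+1)) = A.det * S n (n+1) := by
    rw [hk_deriv, ← bordered n H A rfl h0' n (n+1)]
    simp only [hid]; rfl
  have e3' : D (hk D F (n+1)) = A.det * S (n+1) n := by
    rw [hk_deriv, ← bordered n H A rfl h0' (n+1) n, ← Matrix.det_transpose]
    simp only [hid]
    congr 1
    ext i j
    simp only [Matrix.transpose_apply, Matrix.of_apply, H, add_comm]
  have e4 : D (D (hk D F (n+1))) = A.det * S (n+1) (n+1) := by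
    rw [hk_deriv2, ← bordered n H A rfl h0' (n+1) (n+1)]
  rw [e4, sq]
  nth_rw 1 [e3]
  rw [e3', e2, e1, e0]
  ring


lemma dmul {K : Type*} [CommRing K] (D : Derivation ℤ K K) (x y : K) :
    D (x * y) = D x * y + x * D y := by
  rw [Derivation.leibniz]; simp only [smul_eq_mul]; ring

lemma dsq {K : Type*} [CommRing K] (D : Derivation ℤ K K) (x : K) :
    D (x ^ 2) = 2 * x * D x := by
  rw [sq, dmul]; ring

lemma dofNat {K : Type*} [CommRing K] (D : Derivation ℤ K K) (n : ℕ) [n.AtLeastTwo] :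
    D (OfNat.ofNat n : K) = 0 := D.map_natCast n

lemma bilin {K : Type*} [Field K] (D : Derivation ℤ K K) (p q s v : K)
    (hq : D q = q * s) (hp : D p = p * (s + v)) :
    (D (D p) * q - 2 * D p * D q + p * D (D q) = p * q * (D v + 2 * D s + v^2)) ∧
    (D (D (D p)) * q - 3 * D (D p) * D q + 3 * D p * D (D q) - p * D (D (D q))
      = p * q * (D (D v) + 3 * v * (D v + 2 * D s) + v^3)) := by
  have q2 : D (D q) = q * (s^2 + D s) := by rw [hq, dmul, hq]; ring
  have q3 : D (D (D q)) = q * (s^3 + 3 * s * D s + D (D s)) := by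
    rw [q2, dmul, hq, map_add, dsq]; ring
  have p2 : D (D p) = p * ((s+v)^2 + (D s + D v)) := by rw [hp, dmul, hp, map_add]; ring
  have p3 : D (D (D p)) = p * ((s+v)^3 + 3 * (s+v) * (D s + D v) + (D (D s) + D (D v))) := by
    rw [p2, dmul, hp, map_add, dsq, map_add, map_add]; ring
  rw [p3, p2, q3, q2, hp, hq]
  constructor <;> ring

lemma step {K : Type*} [Field K] [CharZero K] (D : Derivation ℤ K K) (z a h g : K) (M : ℕ)
    (hz : D z = 1) (ha : a ≠ 0) (hh : h ≠ 0)
    (hA : D (D h) * a - 2 * D h * D a + h * D (D a) = 2 * z * (h * a))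
    (hB : D (D (D h)) * a - 3 * D (D h) * D a + 3 * D h * D (D a) - h * D (D (D a))
      = 2 * z * (D h * a - h * D a) + (4 * (M:K) + 2) * (h * a))
    (hT : g * a = D (D h) * h - (D h)^2) :
    g ≠ 0 ∧
    (D (D g) * h - 2 * D g * D h + g * D (D h) = 2 * z * (g * h)) ∧
    (D (D (D g)) * h - 3 * D (D g) * D h + 3 * D g * D (D h) - g * D (D (D h))
      = 2 * z * (D g * h - g * D h) + (4 * ((M + 1 : ℕ):K) + 2) * (g * h)) := by
  obtain ⟨r, hr⟩ : ∃ r, D a = a * r := ⟨D a / a, by field_simp⟩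
  obtain ⟨v, hv⟩ : ∃ v, D h = h * (r + v) := ⟨D h / h - r, by field_simp; ring⟩
  obtain ⟨b1, b2⟩ := bilin D h a r v hr hv
  have hha : h * a ≠ 0 := mul_ne_zero hh ha
  obtain ⟨W, hWd⟩ : ∃ W, W = 2 * (D r + D v) := ⟨_, rfl⟩
  have c1 : D v = W - 2 * z + v^2 := by
    have : h * a * (D v + 2 * D r + v^2) = h * a * (2 * z) := by rw [← b1, hA]; ring
    have := mul_left_cancel₀ hha this
    linear_combination - hWd - this
  have c2 : D (D v) + 3 * v * (D v + 2 * D r) + v^3 = 2 * z * v + (4 * (M:K) + 2) := by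
    apply mul_left_cancel₀ hha
    rw [← b2, hB, hr, hv]; ring
  obtain ⟨c, hc⟩ : ∃ c : K, c = 4 * ((M + 1 : ℕ) : K) := ⟨_, rfl⟩
  have hc0 : c ≠ 0 := by
    rw [hc]; exact mul_ne_zero (by norm_num) (Nat.cast_ne_zero.mpr (Nat.succ_ne_zero M))
  have hDc : D c = 0 := by
    rw [hc, dmul, dofNat, Derivation.map_natCast]; ring
  have hMc : 4 * (M:K) = c - 4 := by rw [hc]; push_cast; ring
  have hW1 : D W = -2 * v * W + c := by
    have e : D (D v) = D W - 2 + 2 * v * D v := by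
      rw [c1, map_add, map_sub, dmul, dofNat, hz, dsq, c1]; ring
    linear_combination c2 - e + hMc + 3 * v * hWd - 3 * v * c1 + 4 * v * c1
  have hW0 : W ≠ 0 := by
    intro h0
    rw [h0] at hW1
    apply hc0
    simpa using hW1.symm
  have h2 : D (D h) = h * ((r+v)^2 + W / 2) := by
    rw [hv, dmul, hv, map_add, hWd]; ring
  have hg : g * a = h^2 * (W / 2) := by rw [hT, h2, hv]; ring
  have hg0 : g ≠ 0 := by
    rintro rfl
    have : h^2 * (W/2) ≠ 0 := mul_ne_zero (pow_ne_zero _ hh) (div_ne_zero hW0 (by norm_num))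
    apply this
    rw [← hg]; ring
  obtain ⟨u, hu⟩ : ∃ u, u * W = c - v * W := ⟨(c - v * W)/W, by field_simp⟩
  have hu' : u = c / W - v := by field_simp; linear_combination hu
  have hg1 : D g = g * ((r + v) + u) := by
    have e : D (g * a) * 2 = D (h^2 * W) := by
      have : h^2 * W = g * a * 2 := by rw [hg]; ring
      rw [this, dmul _ (g*a), dofNat]; ring
    rw [dmul, dmul, dsq, hr, hv, hW1] at e
    apply mul_right_cancel₀ ha
    linear_combination (1/2) * e + (-2 * r - v - u) * hg - (1/2) * h^2 * hu
  have hu1 : D u = 2 * z - W - u^2 := by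
    have e : D (u * W) = D (c - v * W) := by rw [hu]
    rw [dmul, map_sub, dmul, hDc, hW1, c1] at e
    apply mul_right_cancel₀ hW0
    linear_combination e + (u + v) * hu
  have hu2 : D (D u) = 2 + c - 4 * z * u + 2 * u^3 := by
    rw [hu1, map_sub, map_sub, dmul, dofNat, hz, dsq, hu1, hW1]
    linear_combination 2 * hu
  obtain ⟨b3, b4⟩ := bilin D g h (r+v) u hv hg1
  refine ⟨hg0, ?_, ?_⟩
  · rw [b3, map_add, hu1]
    linear_combination - g * h * hWd
  · rw [b4, hu2, hu1, hg1, hv, map_add, ← hc]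
    linear_combination - 3 * u * g * h * hWd

lemma hk_zero {K : Type*} [CommRing K] (D : Derivation ℤ K K) (F : K) : hk D F 0 = 1 := by
  simp [hk]

lemma hk_one {K : Type*} [CommRing K] (D : Derivation ℤ K K) (F : K) : hk D F 1 = F := by
  simp [hk]

lemma main_field {K : Type*} [Field K] [CharZero K] (D : Derivation ℤ K K) (z F : K)
    (hz : D z = 1) (hF : F ≠ 0) (hF2 : D (D F) = 2 * z * F) (N : ℕ) :
    hk D F N ≠ 0 ∧ hk D F (N+1) ≠ 0 ∧
    (D (D (hk D F (N+1))) * hk D F N - 2 * D (hk D F (N+1)) * D (hk D F N)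
      + hk D F (N+1) * D (D (hk D F N)) = 2 * z * (hk D F (N+1) * hk D F N)) ∧
    (D (D (D (hk D F (N+1)))) * hk D F N - 3 * D (D (hk D F (N+1))) * D (hk D F N)
      + 3 * D (hk D F (N+1)) * D (D (hk D F N)) - hk D F (N+1) * D (D (D (hk D F N)))
      = 2 * z * (D (hk D F (N+1)) * hk D F N - hk D F (N+1) * D (hk D F N))
        + (4 * (N:K) + 2) * (hk D F (N+1) * hk D F N)) := by
  induction N with
  | zero =>
    rw [hk_zero, hk_one]
    have h1 : D (1:K) = 0 := D.map_one_eq_zero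
    have h2 : D (2:K) = 0 := dofNat D 2
    simp only [h1, map_zero, hF2, dmul, h2, hz]
    refine ⟨one_ne_zero, hF, by ring, by push_cast; ring⟩
  | succ N ih =>
    obtain ⟨h0, h1, hA, hB⟩ := ih
    obtain ⟨s1, s2, s3⟩ := step D z _ _ (hk D F (N+2)) N hz h0 h1 hA hB (toda D F N h0)
    exact ⟨h1, s1, s2, s3⟩

/-- the ring hom `a ↦ a + ε D a` -/
noncomputable def dualHom {R K : Type*} [CommRing R] [CommRing K] [Algebra R K]
    (D : R → R) (hadd : ∀ a b, D (a + b) = D a + D b)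
    (hmul : ∀ a b, D (a * b) = a * D b + b * D a) : R →+* TrivSqZeroExt K K where
  toFun a := TrivSqZeroExt.inl (algebraMap R K a) + TrivSqZeroExt.inr (algebraMap R K (D a))
  map_one' := by
    have h := hmul 1 1
    simp only [one_mul] at h
    have h1 : D 1 = 0 := by simpa using h
    rw [h1]; ext <;> simp
  map_zero' := by
    have h := hadd 0 0
    have h1 : D 0 = 0 := by simpa using h
    rw [h1]; ext <;> simp
  map_add' a b := by
    rw [hadd, map_add, map_add, TrivSqZeroExt.inl_add, TrivSqZeroExt.inr_add]; abel
  map_mul' a b := by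
    rw [hmul, map_mul, map_add, map_mul, map_mul]
    generalize algebraMap R K a = x
    generalize algebraMap R K b = y
    generalize algebraMap R K (D a) = x'
    generalize algebraMap R K (D b) = y'
    ext
    · simp
    · simp [mul_comm]

lemma exists_ext {R K : Type*} [CommRing R] [IsDomain R] [Field K] [Algebra R K]
    [IsFractionRing R K] (D : R → R) (hadd : ∀ a b, D (a + b) = D a + D b)
    (hmul : ∀ a b, D (a * b) = a * D b + b * D a) :
    ∃ D' : Derivation ℤ K K, ∀ a, D' (algebraMap R K a) = algebraMap R K (D a) := by
  have hs : ∀ a, (dualHom (K := K) D hadd hmul a).fst = algebraMap R K a := by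
    intro a
    simp only [dualHom, RingHom.coe_mk, MonoidHom.coe_mk, OneHom.coe_mk, TrivSqZeroExt.fst_add,
      TrivSqZeroExt.fst_inl, TrivSqZeroExt.fst_inr, add_zero]
  have hs' : ∀ a, (dualHom (K := K) D hadd hmul a).snd = algebraMap R K (D a) := by
    intro a
    simp only [dualHom, RingHom.coe_mk, MonoidHom.coe_mk, OneHom.coe_mk, TrivSqZeroExt.snd_add,
      TrivSqZeroExt.snd_inl, TrivSqZeroExt.snd_inr, zero_add]
  have hunit : ∀ y : nonZeroDivisors R, IsUnit (dualHom (K := K) D hadd hmul y) := by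
    intro y
    rw [TrivSqZeroExt.isUnit_iff_isUnit_fst, hs]
    simp
  let φ : K →+* TrivSqZeroExt K K := IsLocalization.lift hunit
  have hφ : ∀ a, φ (algebraMap R K a) = dualHom (K := K) D hadd hmul a := fun a =>
    IsLocalization.lift_eq hunit a
  have hfst : ∀ x, (φ x).fst = x := by
    intro x
    have : ((TrivSqZeroExt.fstHom ℤ K K).toRingHom.comp φ) = RingHom.id K := by
      apply IsLocalization.ringHom_ext (nonZeroDivisors R)
      ext a
      simp [hφ, hs]
    exact congrArg (fun (f : K →+* K) => f x) this
  refine ⟨Derivation.mk' (AddMonoidHom.toIntLinearMap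
    { toFun := fun x => (φ x).snd, map_zero' := by simp, map_add' := by simp }) ?_, ?_⟩
  · intro a b
    simp [hfst]
    ring
  · intro a
    simp [hφ, hs']

lemma hk_map {R K : Type*} [CommRing R] [CommRing K] (φ : R →+* K)
    (D : R → R) (D' : K → K) (h : ∀ a, D' (φ a) = φ (D a)) (F : R) (N : ℕ) :
    hk D' (φ F) N = φ (hk D F N) := by
  have hit : ∀ k, D'^[k] (φ F) = φ (D^[k] F) := by
    intro k
    induction k with
    | zero => rfl
    | succ k ih => rw [Function.iterate_succ_apply', ih, h, Function.iterate_succ_apply']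
  rw [hk, hk, RingHom.map_det]
  congr 1
  ext i j
  simp [hit]

/-- Real polynomials in three variables: z, f and the derivative of f. -/
abbrev P := MvPolynomial (Fin 3) ℝ

/-- The Airy derivation. -/
noncomputable def DR : Derivation ℝ P P :=
  MvPolynomial.mkDerivation ℝ ![1, MvPolynomial.X 2, 2 * MvPolynomial.X 0 * MvPolynomial.X 1]

/-- The polynomial Hankel determinant. -/
noncomputable def rho (N : ℕ) : P := hk (fun p => DR p) (MvPolynomial.X 1) N

lemma main_poly (N : ℕ) :
    (DR (DR (rho (N+1))) * rho N - 2 * DR (rho (N+1)) * DR (rho N)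
      + rho (N+1) * DR (DR (rho N)) = 2 * MvPolynomial.X 0 * (rho (N+1) * rho N)) ∧
    (DR (DR (DR (rho (N+1)))) * rho N - 3 * DR (DR (rho (N+1))) * DR (rho N)
      + 3 * DR (rho (N+1)) * DR (DR (rho N)) - rho (N+1) * DR (DR (DR (rho N)))
      = 2 * MvPolynomial.X 0 * (DR (rho (N+1)) * rho N - rho (N+1) * DR (rho N))
        + (4 * (N:P) + 2) * (rho (N+1) * rho N)) := by
  let K := FractionRing P
  have : CharZero K := algebraRat.charZero K
  obtain ⟨D', hD'⟩ := exists_ext (K := K) (fun p => DR p) (fun a b => map_add DR a b)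
    (fun a b => by simp [Derivation.leibniz])
  have inj : Function.Injective (algebraMap P K) := IsFractionRing.injective P K
  have hr : ∀ n, hk D' (algebraMap P K (MvPolynomial.X 1)) n = algebraMap P K (rho n) := fun n =>
    hk_map (algebraMap P K) (fun p => DR p) D' hD' _ n
  have hm := main_field D' (algebraMap P K (MvPolynomial.X 0)) (algebraMap P K (MvPolynomial.X 1))
    (by rw [hD', DR, MvPolynomial.mkDerivation_X]; simp)
    (by
      rw [Ne, map_eq_zero_iff _ inj]
      exact MvPolynomial.X_ne_zero _)
    (by
      rw [hD', hD', DR, MvPolynomial.mkDerivation_X]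
      simp [MvPolynomial.mkDerivation_X]
      exact map_ofNat (algebraMap P K) 2) N
  simp only [hr, hD'] at hm
  obtain ⟨-, -, h1, h2⟩ := hm
  constructor
  · apply inj
    simpa only [map_add, map_sub, map_mul, map_ofNat, map_natCast] using h1
  · apply inj
    simpa only [map_add, map_sub, map_mul, map_ofNat, map_natCast] using h2

/-- Evaluation along a function and its derivative. -/
noncomputable def E (f : ℝ → ℝ) (p : P) (z : ℝ) : ℝ :=
  MvPolynomial.eval ![z, f z, deriv f z] p

lemma E_hasDerivAt (f : ℝ → ℝ) (z : ℝ) (h1 : DifferentiableAt ℝ f z)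
    (h2 : DifferentiableAt ℝ (deriv f) z) (h3 : deriv (deriv f) z = 2 * z * f z) (p : P) :
    HasDerivAt (E f p) (E f (DR p) z) z := by
  induction p using MvPolynomial.induction_on with
  | C a =>
    have : E f (MvPolynomial.C a) = fun _ => a := by funext x; simp [E]
    rw [this, MvPolynomial.derivation_C]
    simpa [E] using hasDerivAt_const z a
  | add p q hp hq =>
    have : E f (p + q) = fun x => E f p x + E f q x := by funext x; simp [E]
    rw [this, map_add]
    have := hp.fun_add hq
    simpa [E] using this
  | mul_X p i hp =>
    have e : E f (p * MvPolynomial.X i) = fun x => E f p x * E f (MvPolynomial.X i) x := by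
      funext x; simp [E]
    have hX : HasDerivAt (E f (MvPolynomial.X i)) (E f (DR (MvPolynomial.X i)) z) z := by
      rw [DR, MvPolynomial.mkDerivation_X]
      fin_cases i
      · have : E f (MvPolynomial.X 0) = fun x => x := by funext x; simp [E]
        simpa [this, E] using hasDerivAt_id' z
      · have : E f (MvPolynomial.X 1) = f := by funext x; simp [E]
        simpa [this, E] using h1.hasDerivAt
      · have : E f (MvPolynomial.X 2) = deriv f := by funext x; simp [E]
        simpa [this, E, h3] using h2.hasDerivAt
    rw [e]
    have e2 : E f (DR (p * MvPolynomial.X i)) z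
        = E f (DR p) z * E f (MvPolynomial.X i) z + E f p z * E f (DR (MvPolynomial.X i)) z := by
      rw [Derivation.leibniz]
      simp only [E, smul_eq_mul, map_add, map_mul]
      ring
    rw [e2]
    exact hp.fun_mul hX

end AiryDet

open AiryDet in
/-- Airy-type determinant solutions: if `f` solves the Airy equation `f'' = 2zf` on an
open interval `I` and the Wronskians `ρ_N`, `ρ_{N+1}` are nowhere zero on `I`, then
`u = (log (ρ_{N+1}/ρ_N))'` solves P_II[N] and `W = 2 (log ρ_N)''` solves P_XXXIV[N]
on `I`. -/
theorem airy_determinant_solutions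
    (I : Set ℝ) (hIopen : IsOpen I) (hIconn : I.OrdConnected)
    (f : ℝ → ℝ)
    (hf_smooth : ContDiffOn ℝ (⊤ : ℕ∞) f I)
    (hf_airy : ∀ z ∈ I, deriv (deriv f) z = 2 * z * f z)
    (N : ℕ)
    (hρN_ne : ∀ z ∈ I, airyWronskian f N z ≠ 0)
    (hρN1_ne : ∀ z ∈ I, airyWronskian f (N + 1) z ≠ 0)
    (u W : ℝ → ℝ)
    (hu : u = fun z => deriv (airyWronskian f (N + 1)) z / airyWronskian f (N + 1) z
      - deriv (airyWronskian f N) z / airyWronskian f N z)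
    (hW : W = fun z =>
      2 * (deriv (deriv (airyWronskian f N)) z * airyWronskian f N z
        - (deriv (airyWronskian f N) z) ^ 2) / (airyWronskian f N z) ^ 2) :
    ∀ z ∈ I,
      (deriv (deriv u) z = 2 * (u z) ^ 3 - 4 * z * u z + 4 * ((N : ℝ) + 1 / 2)) ∧
      (2 * W z * deriv (deriv W) z - (deriv W z) ^ 2 + 4 * (W z) ^ 3
        - 8 * z * (W z) ^ 2 + 16 * (N : ℝ) ^ 2 = 0) := by
  have hd1 : ∀ z ∈ I, DifferentiableAt ℝ f z := fun z hz =>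
    (hf_smooth.contDiffAt (hIopen.mem_nhds hz)).differentiableAt (by simp)
  have hd2 : ∀ z ∈ I, DifferentiableAt ℝ (deriv f) z := fun z hz =>
    ((hf_smooth.deriv_of_isOpen (m := 1) hIopen (by
      norm_cast)).contDiffAt (hIopen.mem_nhds hz)).differentiableAt (by simp)
  have hE : ∀ p, ∀ z ∈ I, HasDerivAt (E f p) (E f (DR p) z) z := fun p z hz =>
    E_hasDerivAt f z (hd1 z hz) (hd2 z hz) (hf_airy z hz) p
  -- transfer of derivatives on I
  have tr : ∀ (F G : ℝ → ℝ) (G' : ℝ), (∀ z ∈ I, F z = G z) → ∀ z ∈ I,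
      HasDerivAt G G' z → deriv F z = G' := by
    intro F G G' h z hz hG
    have : F =ᶠ[nhds z] G := by
      filter_upwards [hIopen.mem_nhds hz] with x hx using h x hx
    rw [this.deriv_eq, hG.deriv]
  have hit : ∀ k, ∀ z ∈ I, iteratedDeriv k f z = E f ((fun p => DR p)^[k] (MvPolynomial.X 1)) z := by
    intro k
    induction k with
    | zero => intro z hz; simp [E]
    | succ k ih =>
      intro z hz
      rw [iteratedDeriv_succ, Function.iterate_succ_apply']
      exact tr _ _ _ ih z hz (hE _ z hz)
  have hρ : ∀ n, ∀ z ∈ I, airyWronskian f n z = E f (rho n) z := by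
    intro n z hz
    rw [airyWronskian, E, rho, hk, RingHom.map_det]
    congr 1
    ext i j
    simp only [Matrix.of_apply, hit _ z hz, E, RingHom.mapMatrix_apply, Matrix.map_apply]
  have hρ1 : ∀ n, ∀ z ∈ I, deriv (airyWronskian f n) z = E f (DR (rho n)) z := fun n z hz =>
    tr _ _ _ (hρ n) z hz (hE _ z hz)
  have hρ2 : ∀ n, ∀ z ∈ I, deriv (deriv (airyWronskian f n)) z = E f (DR (DR (rho n))) z :=
    fun n z hz => tr _ _ _ (hρ1 n) z hz (hE _ z hz)
  obtain ⟨g, hg⟩ : ∃ g, g = rho (N+1) := ⟨_, rfl⟩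
  obtain ⟨h, hh⟩ : ∃ h, h = rho N := ⟨_, rfl⟩
  obtain ⟨hA, hB⟩ := main_poly N
  rw [← hg, ← hh] at hA hB
  have hA' : ∀ z, E f (DR (DR g)) z * E f h z - 2 * E f (DR g) z * E f (DR h) z
      + E f g z * E f (DR (DR h)) z = 2 * z * (E f g z * E f h z) := by
    intro z
    have := congrArg (fun p => E f p z) hA
    simpa [E] using this
  have hB' : ∀ z, E f (DR (DR (DR g))) z * E f h z - 3 * E f (DR (DR g)) z * E f (DR h) z
      + 3 * E f (DR g) z * E f (DR (DR h)) z - E f g z * E f (DR (DR (DR h))) z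
      = 2 * z * (E f (DR g) z * E f h z - E f g z * E f (DR h) z)
        + (4 * (N:ℝ) + 2) * (E f g z * E f h z) := by
    intro z
    have := congrArg (fun p => E f p z) hB
    simpa [E] using this
  have g0 : ∀ z ∈ I, E f g z ≠ 0 := fun z hz => by
    rw [hg, ← hρ _ z hz]; exact hρN1_ne z hz
  have h0 : ∀ z ∈ I, E f h z ≠ 0 := fun z hz => by
    rw [hh, ← hρ _ z hz]; exact hρN_ne z hz
  have uE : ∀ z ∈ I, u z = E f (DR g) z / E f g z - E f (DR h) z / E f h z := by
    intro z hz
    simp only [hu, hρ1 _ z hz, hρ _ z hz, hg, hh]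
  have ud : ∀ z ∈ I, HasDerivAt u
      ((E f (DR (DR g)) z * E f g z - E f (DR g) z * E f (DR g) z) / (E f g z)^2
      - (E f (DR (DR h)) z * E f h z - E f (DR h) z * E f (DR h) z) / (E f h z)^2) z := by
    intro z hz
    refine HasDerivAt.congr_of_eventuallyEq
      (((hE (DR g) z hz).fun_div (hE g z hz) (g0 z hz)).fun_sub
      ((hE (DR h) z hz).fun_div (hE h z hz) (h0 z hz))) ?_
    filter_upwards [hIopen.mem_nhds hz] with x hx using uE x hx
  have WE : ∀ z ∈ I, W z = 2 * (E f (DR (DR h)) z * E f h z - E f (DR h) z ^ 2)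
      / (E f h z)^2 := by
    intro z hz
    simp only [hW, hρ2 _ z hz, hρ1 _ z hz, hρ _ z hz, hh]
  have Wu : ∀ z ∈ I, deriv u z = 2 * z - u z ^ 2 - W z := by
    intro z hz
    rw [(ud z hz).deriv, uE z hz, WE z hz]
    have a := g0 z hz
    have b := h0 z hz
    have c := hA' z
    field_simp
    linear_combination E f g z * E f h z * c
  have Wd : ∀ z ∈ I, HasDerivAt W (2 * u z * W z - 4 * N) z := by
    intro z hz
    have n1 := ((((hE (DR (DR h)) z hz).fun_mul (hE h z hz)).fun_sub
      ((hE (DR h) z hz).fun_pow 2)).const_mul 2).fun_div ((hE h z hz).fun_pow 2)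
      (pow_ne_zero 2 (h0 z hz))
    have n2 : HasDerivAt W _ z := HasDerivAt.congr_of_eventuallyEq n1 (by
      filter_upwards [hIopen.mem_nhds hz] with x hx using WE x hx)
    convert n2 using 1
    rw [uE z hz, WE z hz]
    have a := g0 z hz
    have b := h0 z hz
    have c := hA' z
    have d := hB' z
    have c' : HasDerivAt _ _ z := (((hE (DR (DR g)) z hz).fun_mul (hE h z hz)).fun_sub
      (((hE (DR g) z hz).const_mul 2).fun_mul (hE (DR h) z hz))).fun_add
      ((hE g z hz).fun_mul (hE (DR (DR h)) z hz))
    have c'' : HasDerivAt (fun z => 2 * z * (E f g z * E f h z)) _ z :=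
      ((hasDerivAt_id' z).const_mul 2).fun_mul ((hE g z hz).fun_mul (hE h z hz))
    have cc := c'.unique (c''.congr_of_eventuallyEq (Filter.Eventually.of_forall hA'))
    simp only [mul_one] at cc
    field_simp
    linear_combination (- E f h z) * (E f h z ^ 2 * cc - E f h z ^ 2 * d
      - 2 * E f h z * E f (DR h) z * c)
  intro z hz
  have ud' : HasDerivAt u (2 * z - u z ^ 2 - W z) z := by
    rw [← Wu z hz]; exact (ud z hz).differentiableAt.hasDerivAt
  constructor
  · have e : HasDerivAt (fun z => 2 * z - u z ^ 2 - W z) _ z :=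
      ((((hasDerivAt_id' z).const_mul 2).fun_sub (ud'.fun_pow 2)).fun_sub (Wd z hz))
    rw [tr _ _ _ Wu z hz e]
    simp
    ring
  · have W1 : ∀ z ∈ I, deriv W z = 2 * u z * W z - 4 * N := fun z hz => (Wd z hz).deriv
    have e : HasDerivAt (fun z => 2 * u z * W z - 4 * N) _ z :=
      (((ud'.const_mul 2).fun_mul (Wd z hz)).sub_const (4 * (N:ℝ)))
    rw [tr _ _ _ W1 z hz e, W1 z hz]
    ring
end

section
/- (Rational Hankel determinant solutions) Define polynomials a_n (n ≥ 0) in z by a_0 = z and a_n = a_{n−1}' + Σ_{k=0}^{n−2} a_k·a_{n−k−2} for n ≥ 1 (the sum is empty for n = 1), and for N ≥ 0 let κ_N = det(a_{i+j−2})_{1≤i,j≤N} (κ_0 = 1). Then on any open interval I ⊆ ℝ on which κ_N and κ_{N+1} are nowhere zero, u = (log(κ_{N+1}/κ_N))' = κ_{N+1}'/κ_{N+1} − κ_N'/κ_N is a solution of P_II[N + 1/2], and W = 2z + 2(log κ_N)'' = 2z + 2(κ_N''·κ_N − (κ_N')²)/κ_N² is a solution of P_XXXIV[N + 1/2]. 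-/
open Polynomial

/-- The Hankel-type matrix with row labels `r` and column labels `c`. -/
def hkMat {n : ℕ} (p : ℕ → ℝ[X]) (r c : Fin n → ℕ) : Matrix (Fin n) (Fin n) ℝ[X] :=
  Matrix.of fun i j => p (r i + c j)

lemma hkMat_updateRow {n : ℕ} (p : ℕ → ℝ[X]) (r c : Fin n → ℕ) (i : Fin n) (k : ℕ) :
    (hkMat p r c).updateRow i (fun j => p (k + c j)) = hkMat p (Function.update r i k) c := by
  ext1 a b
  by_cases h : a = i
  · subst h; simp [hkMat]
  · simp [hkMat, Matrix.updateRow_ne h, Function.update_of_ne h]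

lemma hkMat_updateCol {n : ℕ} (p : ℕ → ℝ[X]) (r c : Fin n → ℕ) (i : Fin n) (k : ℕ) :
    (hkMat p r c).updateCol i (fun j => p (r j + k)) = hkMat p r (Function.update c i k) := by
  ext1 a b
  by_cases h : b = i
  · subst h; simp [hkMat]
  · simp [hkMat, Matrix.updateCol_ne h, Function.update_of_ne h]

lemma hkMat_det_row {n : ℕ} (p : ℕ → ℝ[X]) (r c : Fin n → ℕ) (i j : Fin n) (h : i ≠ j)
    (hr : r i = r j) : (hkMat p r c).det = 0 := by
  apply Matrix.det_zero_of_row_eq h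
  ext1 k
  simp [hkMat, hr]

lemma hkMat_det_symm {n : ℕ} (p : ℕ → ℝ[X]) (r c : Fin n → ℕ) :
    (hkMat p r c).det = (hkMat p c r).det := by
  rw [← Matrix.det_transpose]
  congr 1
  ext1 i j
  simp [hkMat, add_comm]

lemma derivative_det_col {n : ℕ} (M : Matrix (Fin n) (Fin n) ℝ[X]) :
    derivative M.det = ∑ j, (M.updateCol j (fun i => derivative (M i j))).det := by
  simp only [Matrix.det_apply, derivative_sum]
  rw [Finset.sum_comm]
  refine Finset.sum_congr rfl fun σ _ => ?_
  rw [← Finset.smul_sum, Units.smul_def, Units.smul_def, derivative_smul, derivative_prod_finset]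
  congr 1
  refine Finset.sum_congr rfl fun j _ => ?_
  rw [← Finset.mul_prod_erase Finset.univ _ (Finset.mem_univ j), mul_comm]
  congr 1
  · simp
  · refine Finset.prod_congr rfl fun k hk => ?_
    rw [Matrix.updateCol_ne (Finset.ne_of_mem_erase hk)]

lemma sum_det_col {n : ℕ} (M X : Matrix (Fin n) (Fin n) ℝ[X]) :
    ∑ j, (M.updateCol j (fun i => X i j)).det = (M.adjugate * X).trace := by
  simp only [← Matrix.cramer_apply, Matrix.cramer_eq_adjugate_mulVec]
  rfl

lemma sum_det_row {n : ℕ} (M X : Matrix (Fin n) (Fin n) ℝ[X]) :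
    ∑ i, (M.updateRow i (fun j => X i j)).det = (M.adjugate * X).trace := by
  simp only [← Matrix.cramer_transpose_apply, Matrix.cramer_eq_adjugate_mulVec,
    ← Matrix.adjugate_transpose]
  rw [Matrix.trace_mul_comm]
  simp only [Matrix.trace, Matrix.diag, Matrix.mul_apply, Matrix.mulVec, dotProduct,
    Matrix.transpose_apply]
  simp_rw [mul_comm]

/-- labels `0, …, n` -/
def lab0 (n : ℕ) : Fin (n + 1) → ℕ := fun i => i

/-- labels `0, …, n - 1, n + 1` -/
def lab1 (n : ℕ) : Fin (n + 1) → ℕ := Function.update (lab0 n) (Fin.last n) (n + 1)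

lemma conv_split (p : ℕ → ℝ[X]) (i c : ℕ) :
    ∑ k ∈ Finset.range (i + c), p k * p (i + c - 1 - k) =
      ∑ m ∈ Finset.range i, p (i - 1 - m) * p (m + c) +
      ∑ m ∈ Finset.range c, p (c - 1 - m) * p (i + m) := by
  rw [Finset.sum_range_add]
  congr 1
  · rw [← Finset.sum_range_reflect]
    refine Finset.sum_congr rfl fun m hm => ?_
    have := Finset.mem_range.1 hm
    congr 2; omega
  · refine Finset.sum_congr rfl fun m hm => ?_
    rw [mul_comm]; congr 2; omega

lemma hk_derivative (p : ℕ → ℝ[X])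
    (hp : ∀ n, p (n + 1) = derivative (p n) + ∑ k ∈ Finset.range n, p k * p (n - 1 - k))
    (n : ℕ) (c : Fin (n + 1) → ℕ) :
    derivative (hkMat p (lab0 n) c).det = (hkMat p (lab1 n) c).det -
      ∑ j, ∑ m ∈ Finset.range (c j),
        p (c j - 1 - m) * (hkMat p (lab0 n) (Function.update c j m)).det := by
  set G := hkMat p (lab0 n) c with hG
  let S : Matrix (Fin (n + 1)) (Fin (n + 1)) ℝ[X] := Matrix.of fun i j => p (i + 1 + c j)
  let L : Matrix (Fin (n + 1)) (Fin (n + 1)) ℝ[X] :=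
    Matrix.of fun i m => if (m : ℕ) < i then p (i - 1 - m) else 0
  let Y : Matrix (Fin (n + 1)) (Fin (n + 1)) ℝ[X] :=
    Matrix.of fun i j => ∑ m ∈ Finset.range (c j), p (c j - 1 - m) * p (i + m)
  have hLG : ∀ i j, (L * G) i j = ∑ m ∈ Finset.range (i : ℕ), p (i - 1 - m) * p (m + c j) := by
    intro i j
    simp only [Matrix.mul_apply, L, G, hkMat, Matrix.of_apply, lab0]
    rw [Fin.sum_univ_eq_sum_range
      (fun m => (if m < (i : ℕ) then p (i - 1 - m) else 0) * p (m + c j)) (n + 1)]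
    simp only [ite_mul, zero_mul]
    rw [← Finset.sum_filter]
    congr 1
    ext m
    simp only [Finset.mem_filter, Finset.mem_range]
    have := i.2
    omega
  have hX : (Matrix.of fun i j => derivative (G i j)) = S - L * G - Y := by
    ext1 i j
    rw [Matrix.sub_apply, Matrix.sub_apply, hLG]
    have h1 := hp (i + c j)
    rw [conv_split] at h1
    simp only [S, Y, G, hkMat, Matrix.of_apply, lab0]
    rw [show (i : ℕ) + 1 + c j = i + c j + 1 by omega, h1]
    ring
  have h1 : derivative G.det = (G.adjugate * (S - L * G - Y)).trace := by
    rw [derivative_det_col, ← hX, ← sum_det_col]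
    rfl
  have h2 : (G.adjugate * S).trace = (hkMat p (lab1 n) c).det := by
    rw [← sum_det_row]
    have : ∀ i, (G.updateRow i (fun j => S i j)).det
        = (hkMat p (Function.update (lab0 n) i (i + 1)) c).det := by
      intro i
      rw [← hkMat_updateRow]
      rfl
    simp only [this]
    rw [Finset.sum_eq_single (Fin.last n)]
    · simp [lab1]
    · intro b _ hb
      have hb' : (b : ℕ) < n := by
        have := b.2
        have h3 : (b : ℕ) ≠ n := fun h => hb (Fin.ext h)
        omega
      apply hkMat_det_row p _ _ b ⟨b + 1, by omega⟩
      · intro h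
        have := congrArg Fin.val h
        simp at this
      · rw [Function.update_self, Function.update_of_ne]
        · simp [lab0]
        · intro h
          have := congrArg Fin.val h
          simp at this
    · simp
  have h3 : (G.adjugate * (L * G)).trace = 0 := by
    rw [Matrix.trace_mul_comm, Matrix.mul_assoc, Matrix.mul_adjugate]
    simp [Matrix.trace, L]
  have h4 : (G.adjugate * Y).trace = ∑ j, ∑ m ∈ Finset.range (c j),
        p (c j - 1 - m) * (hkMat p (lab0 n) (Function.update c j m)).det := by
    rw [← sum_det_col]
    refine Finset.sum_congr rfl fun j _ => ?_
    rw [← Matrix.cramer_apply]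
    have : (fun i => Y i j) = ∑ m ∈ Finset.range (c j),
        p (c j - 1 - m) • (fun i : Fin (n + 1) => p (i + m)) := by
      ext1 i
      simp [Y, Finset.sum_apply]
    rw [this, map_sum, Finset.sum_apply]
    refine Finset.sum_congr rfl fun m _ => ?_
    rw [map_smul, Pi.smul_apply, Matrix.cramer_apply, smul_eq_mul, ← hkMat_updateCol]
    rfl
  rw [h1, Matrix.mul_sub, Matrix.mul_sub, Matrix.trace_sub, Matrix.trace_sub, h2, h3, h4, sub_zero]

lemma hk_zero_aux (p : ℕ → ℝ[X]) (n : ℕ) (c : Fin (n + 1) → ℕ) (j : Fin (n + 1)) (m : ℕ)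
    (k : Fin (n + 1)) (hk : k ≠ j) (hc : c k = m) :
    (hkMat p (lab0 n) (Function.update c j m)).det = 0 := by
  rw [hkMat_det_symm]
  apply hkMat_det_row p _ _ k j hk
  rw [Function.update_self, Function.update_of_ne hk, hc]

lemma hk_derivative_zero (p : ℕ → ℝ[X])
    (hp : ∀ n, p (n + 1) = derivative (p n) + ∑ k ∈ Finset.range n, p k * p (n - 1 - k))
    (n : ℕ) :
    derivative (hkMat p (lab0 n) (lab0 n)).det = (hkMat p (lab0 n) (lab1 n)).det := by
  rw [hk_derivative p hp, hkMat_det_symm p (lab0 n) (lab1 n), sub_eq_self]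
  refine Finset.sum_eq_zero fun j _ => Finset.sum_eq_zero fun m hm => ?_
  have hm' : m < (j : ℕ) := Finset.mem_range.1 hm
  rw [hk_zero_aux p n _ j m ⟨m, by omega⟩ (fun h => by simp [← h] at hm') rfl, mul_zero]

lemma hk_derivative_one (p : ℕ → ℝ[X])
    (hp : ∀ n, p (n + 1) = derivative (p n) + ∑ k ∈ Finset.range n, p k * p (n - 1 - k))
    (n : ℕ) :
    derivative (hkMat p (lab0 n) (lab1 n)).det =
      (hkMat p (lab1 n) (lab1 n)).det - p 0 * (hkMat p (lab0 n) (lab0 n)).det := by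
  rw [hk_derivative p hp]
  congr 1
  rw [Finset.sum_eq_single (Fin.last n)]
  · have h1 : lab1 n (Fin.last n) = n + 1 := by simp [lab1]
    rw [h1, Finset.sum_range_succ, Finset.sum_eq_zero, zero_add]
    · have : Function.update (lab1 n) (Fin.last n) n = lab0 n := by
        rw [lab1, Function.update_idem]
        exact Function.update_eq_self (Fin.last n) (lab0 n)
      rw [this]
      simp
    · intro m hm
      have hm' : m < n := Finset.mem_range.1 hm
      have hne : (⟨m, by omega⟩ : Fin (n + 1)) ≠ Fin.last n :=
        fun h => by have := congrArg Fin.val h; simp at this; omega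
      rw [hk_zero_aux p n _ _ m ⟨m, by omega⟩ hne, mul_zero]
      rw [lab1, Function.update_of_ne hne]; rfl
  · intro j _ hj
    have h1 : lab1 n j = j := by rw [lab1, Function.update_of_ne hj]; rfl
    rw [h1]
    refine Finset.sum_eq_zero fun m hm => ?_
    have hm' : m < (j : ℕ) := Finset.mem_range.1 hm
    have hne : (⟨m, by omega⟩ : Fin (n + 1)) ≠ Fin.last n :=
        fun h => by have := congrArg Fin.val h; simp at this; omega
    rw [hk_zero_aux p n _ _ m ⟨m, by omega⟩ (fun h => by simp [← h] at hm'), mul_zero]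
    rw [lab1, Function.update_of_ne hne]; rfl
  · simp

/-- Desnanot–Jacobi with invertible core block, over a field. -/
lemma dodgson_field {K : Type*} [Field K] {n : ℕ} (D : Matrix (Fin n) (Fin n) K)
    (B : Matrix (Fin n) (Fin 2) K) (C : Matrix (Fin 2) (Fin n) K) (E : Matrix (Fin 2) (Fin 2) K)
    (hD : D.det ≠ 0) :
    let m : Fin 2 → Fin 2 → K := fun i j => (Matrix.fromBlocks D
      (B.submatrix id (fun _ : Fin 1 => j)) (C.submatrix (fun _ : Fin 1 => i) id)
      (E.submatrix (fun _ : Fin 1 => i) (fun _ : Fin 1 => j))).det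
    (Matrix.fromBlocks D B C E).det * D.det = m 0 0 * m 1 1 - m 0 1 * m 1 0 := by
  intro m
  let _ : Invertible D := Matrix.invertibleOfIsUnitDet D hD.isUnit
  have hm : ∀ i j, m i j = D.det * (E - C * ⅟D * B) i j := by
    intro i j
    simp only [m]
    rw [Matrix.det_fromBlocks₁₁, Matrix.det_fin_one]
    rfl
  rw [hm, hm, hm, hm, Matrix.det_fromBlocks₁₁, Matrix.det_fin_two]
  ring

lemma dodgson_poly {n : ℕ} (D : Matrix (Fin n) (Fin n) ℝ[X])
    (B : Matrix (Fin n) (Fin 2) ℝ[X]) (C : Matrix (Fin 2) (Fin n) ℝ[X])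
    (E : Matrix (Fin 2) (Fin 2) ℝ[X]) (hD : D.det ≠ 0) :
    let m : Fin 2 → Fin 2 → ℝ[X] := fun i j => (Matrix.fromBlocks D
      (B.submatrix id (fun _ : Fin 1 => j)) (C.submatrix (fun _ : Fin 1 => i) id)
      (E.submatrix (fun _ : Fin 1 => i) (fun _ : Fin 1 => j))).det
    (Matrix.fromBlocks D B C E).det * D.det = m 0 0 * m 1 1 - m 0 1 * m 1 0 := by
  intro m
  let f := algebraMap ℝ[X] (FractionRing ℝ[X])
  have hf : Function.Injective f := IsFractionRing.injective ℝ[X] (FractionRing ℝ[X])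
  have hD' : (f.mapMatrix D).det ≠ 0 := by
    rw [← RingHom.map_det]
    exact fun h => hD (hf (by rw [h, map_zero]))
  have h := dodgson_field (D.map f) (B.map f) (C.map f) (E.map f) hD'
  apply hf
  simp only [m, map_mul, map_sub, RingHom.map_det, RingHom.mapMatrix_apply, Matrix.fromBlocks_map]
  exact h

/-- the labels on a block index type -/
def blab {n k : ℕ} (s : Fin k → ℕ) : Fin n ⊕ Fin k → ℕ := Sum.elim (fun i => i) s

lemma hk_block {n k : ℕ} (p : ℕ → ℝ[X]) (r c : Fin (n + k) → ℕ) (s t : Fin k → ℕ)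
    (hr : ∀ x, r (finSumFinEquiv x) = blab s x) (hc : ∀ x, c (finSumFinEquiv x) = blab t x) :
    (Matrix.fromBlocks (Matrix.of fun i j : Fin n => p (i + j))
      (Matrix.of fun (i : Fin n) (j : Fin k) => p (i + t j))
      (Matrix.of fun (i : Fin k) (j : Fin n) => p (s i + j))
      (Matrix.of fun (i : Fin k) (j : Fin k) => p (s i + t j))).det = (hkMat p r c).det := by
  rw [← Matrix.det_submatrix_equiv_self finSumFinEquiv]
  congr 1
  ext1 i j
  simp only [Matrix.submatrix_apply, hkMat, Matrix.of_apply, hr, hc]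
  rcases i with i | i <;> rcases j with j | j <;> simp [blab]

lemma lab0_block (n : ℕ) (x : Fin n ⊕ Fin 1) :
    lab0 n (finSumFinEquiv x) = blab (fun _ => n) x := by
  rcases x with x | x <;> simp [lab0, blab]

lemma lab1_block (n : ℕ) (x : Fin n ⊕ Fin 1) :
    lab1 n (finSumFinEquiv x) = blab (fun _ => n + 1) x := by
  rcases x with x | x
  · have : (Fin.castAdd 1 x : Fin (n + 1)) ≠ Fin.last n := by
      intro h
      have h1 := congrArg Fin.val h
      have := x.2
      simp at h1
      omega
    simp only [finSumFinEquiv_apply_left, blab, Sum.elim_inl, lab1]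
    rw [Function.update_of_ne this]
    simp [lab0]
  · have : (Fin.natAdd n x : Fin (n + 1)) = Fin.last n := by
      ext; simp
    simp only [finSumFinEquiv_apply_right, blab, Sum.elim_inr, lab1]
    rw [this, Function.update_self]

lemma hk_dodgson (p : ℕ → ℝ[X]) (n : ℕ)
    (h0 : (Matrix.of fun i j : Fin n => p ((i : ℕ) + (j : ℕ))).det ≠ 0) :
    (Matrix.of fun i j : Fin (n + 2) => p ((i : ℕ) + (j : ℕ))).det *
      (Matrix.of fun i j : Fin n => p ((i : ℕ) + (j : ℕ))).det =
    (hkMat p (lab0 n) (lab0 n)).det * (hkMat p (lab1 n) (lab1 n)).det -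
      (hkMat p (lab0 n) (lab1 n)).det ^ 2 := by
  have h := dodgson_poly (Matrix.of fun i j : Fin n => p (i + j))
      (Matrix.of fun (i : Fin n) (j : Fin 2) => p (i + (n + j)))
      (Matrix.of fun (i : Fin 2) (j : Fin n) => p ((n + i) + j))
      (Matrix.of fun (i : Fin 2) (j : Fin 2) => p ((n + i) + (n + j))) h0
  have e := hk_block (n := n) (k := 2) p (fun i => i) (fun i => i) (fun i => n + i) (fun i => n + i)
    (by rintro (x | x) <;> simp [blab]) (by rintro (x | x) <;> simp [blab])
  have e00 := hk_block (n := n) (k := 1) p (lab0 n) (lab0 n) _ _ (lab0_block n) (lab0_block n)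
  have e01 := hk_block (n := n) (k := 1) p (lab0 n) (lab1 n) _ _ (lab0_block n) (lab1_block n)
  have e10 := hk_block (n := n) (k := 1) p (lab1 n) (lab0 n) _ _ (lab1_block n) (lab0_block n)
  have e11 := hk_block (n := n) (k := 1) p (lab1 n) (lab1 n) _ _ (lab1_block n) (lab1_block n)
  rw [pow_two]
  nth_rewrite 2 [hkMat_det_symm p (lab0 n) (lab1 n)]
  rw [← e00, ← e01, ← e10, ← e11]
  exact (congrArg (· * _) e.symm).trans h

lemma toda (p : ℕ → ℝ[X]) (hp0 : p 0 = X)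
    (hp : ∀ n, p (n + 1) = derivative (p n) + ∑ k ∈ Finset.range n, p k * p (n - 1 - k))
    (k : ℕ → ℝ[X]) (hk : ∀ n, k n = (Matrix.of fun i j : Fin n => p ((i : ℕ) + (j : ℕ))).det)
    (n : ℕ) (h0 : k n ≠ 0) :
    k (n + 2) * k n = derivative (derivative (k (n + 1))) * k (n + 1)
      - derivative (k (n + 1)) ^ 2 + X * k (n + 1) ^ 2 := by
  have h1 : k (n + 1) = (hkMat p (lab0 n) (lab0 n)).det := hk (n + 1)
  rw [h1, hk_derivative_zero p hp, hk_derivative_one p hp, hp0, hk n, hk (n + 2),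
    hk_dodgson p n (by rw [← hk]; exact h0)]
  ring

/-- One step of the induction on the bilinear identities. -/
lemma bilinear_step (x c j k l m : ℝ[X]) (hx : derivative x = 1) (hc : derivative c = 0)
    (hk : k ≠ 0) (hl : l ≠ 0)
    (T : l * j = derivative (derivative k) * k - derivative k ^ 2 + x * k ^ 2)
    (T' : m * k = derivative (derivative l) * l - derivative l ^ 2 + x * l ^ 2)
    (A : derivative (derivative l) * k - 2 * derivative l * derivative k
      + l * derivative (derivative k) = 0)
    (B : derivative l * j - l * derivative j = c * k ^ 2) :
    (derivative (derivative m) * l - 2 * derivative m * derivative l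
      + m * derivative (derivative l) = 0) ∧
    (derivative m * k - m * derivative k = (c + 2) * l ^ 2) := by
  have dT := congrArg derivative T
  have dT' := congrArg derivative T'
  have dA := congrArg derivative A
  simp only [derivative_mul, derivative_add, derivative_sub, derivative_pow, hx, derivative_zero,
    derivative_ofNat, Nat.cast_ofNat, map_ofNat] at dT dT' dA
  norm_num at dT dT' dA
  have B' : derivative m * k - m * derivative k = (c + 2) * l ^ 2 := by
    have hk2 : k ^ 2 ≠ 0 := pow_ne_zero _ hk
    apply mul_left_cancel₀ hk2
    generalize derivative (derivative (derivative k)) = k3 at *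
    generalize derivative (derivative (derivative l)) = l3 at *
    generalize derivative (derivative k) = k2 at *
    generalize derivative (derivative l) = l2 at *
    generalize derivative k = k1 at *
    generalize derivative l = l1 at *
    generalize derivative j = j1 at *
    generalize derivative m = m1 at *
    linear_combination (k^2) * dT' - 2 * k * k1 * T' + (l * k) * dA
      - (k * l1 + l * k1) * A + l^2 * B + l^2 * dT - 2 * l * l1 * T
  refine ⟨?_, B'⟩
  have dB := congrArg derivative B'
  simp only [derivative_mul, derivative_add, derivative_sub, derivative_pow, hc,
    derivative_ofNat, Nat.cast_ofNat, map_ofNat] at dB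
  norm_num at dB
  apply mul_left_cancel₀ hk
  rw [mul_zero]
  linear_combination l * dB - 2 * derivative l * B' + m * A

lemma bilinear_all (k : ℕ → ℝ[X]) (k0 : k 0 = 1) (k1 : k 1 = X)
    (T : ∀ n, k n ≠ 0 → k (n + 2) * k n = derivative (derivative (k (n + 1))) * k (n + 1)
      - derivative (k (n + 1)) ^ 2 + X * k (n + 1) ^ 2) (n : ℕ) :
    ∃ j : ℝ[X], k n ≠ 0 ∧ k (n + 1) ≠ 0 ∧
      (k (n + 1) * j = derivative (derivative (k n)) * k n - derivative (k n) ^ 2 + X * k n ^ 2) ∧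
      (derivative (derivative (k (n + 1))) * k n - 2 * derivative (k (n + 1)) * derivative (k n)
        + k (n + 1) * derivative (derivative (k n)) = 0) ∧
      (derivative (k (n + 1)) * j - k (n + 1) * derivative j = (2 * (n : ℝ[X]) + 1) * k n ^ 2) := by
  induction n with
  | zero =>
    refine ⟨1, ?_⟩
    simp [k0, k1]
  | succ n ih =>
    obtain ⟨j, h0, h1, hT, hA, hB⟩ := ih
    have hT' := T n h0
    obtain ⟨hA', hB'⟩ := bilinear_step X (2 * (n : ℝ[X]) + 1) j (k n) (k (n + 1)) (k (n + 2))
      derivative_X (by simp) h0 h1 hT hT' hA hB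
    have hB'' : derivative (k (n + 2)) * k n - k (n + 2) * derivative (k n)
      = (2 * ((n + 1 : ℕ) : ℝ[X]) + 1) * k (n + 1) ^ 2 := by
      rw [hB']; push_cast; ring
    refine ⟨k n, h1, ?_, hT', hA', hB''⟩
    intro h2
    rw [show n + 1 + 1 = n + 2 from rfl] at h2
    rw [h2] at hB''
    simp only [derivative_zero, zero_mul, sub_zero] at hB''
    have h3 : (2 * ((n + 1 : ℕ) : ℝ[X]) + 1) ≠ 0 := by
      exact_mod_cast (by omega : 2 * (n + 1) + 1 ≠ 0)
    exact mul_ne_zero h3 (pow_ne_zero 2 h1) hB''.symm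

lemma exists_poly (a : ℕ → ℝ → ℝ) (ha_zero : a 0 = fun z => z)
    (ha_rec : ∀ n : ℕ, a (n + 1) = fun z =>
      deriv (a n) z + ∑ k ∈ Finset.range n, a k z * a (n - 1 - k) z) (n : ℕ) :
    ∃ p : ℝ[X], a n = fun z => p.eval z := by
  induction n using Nat.strong_induction_on with
  | _ n ih =>
    rcases n with _ | n
    · exact ⟨X, by simp [ha_zero]⟩
    · choose! q hq using ih
      refine ⟨derivative (q n) + ∑ k ∈ Finset.range n, q k * q (n - 1 - k), ?_⟩
      rw [ha_rec]
      ext1 z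
      rw [eval_add, eval_finsetSum, hq n (by omega)]
      simp only [Polynomial.deriv, eval_mul]
      congr 1
      refine Finset.sum_congr rfl fun i hi => ?_
      have := Finset.mem_range.1 hi
      rw [hq i (by omega), hq (n - 1 - i) (by omega)]

theorem rational_hankel_determinant_solutions
    (a : ℕ → ℝ → ℝ)
    (ha_zero : a 0 = fun z => z)
    (ha_rec : ∀ n : ℕ, a (n + 1) = fun z =>
      deriv (a n) z + ∑ k ∈ Finset.range n, a k z * a (n - 1 - k) z)
    (κ : ℕ → ℝ → ℝ)
    (hκ : ∀ N : ℕ, κ N = fun z =>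
      Matrix.det (Matrix.of fun i j : Fin N => a ((i : ℕ) + (j : ℕ)) z))
    (I : Set ℝ) (hIopen : IsOpen I) (hIconn : I.OrdConnected)
    (N : ℕ)
    (hκN_ne : ∀ z ∈ I, κ N z ≠ 0)
    (hκN1_ne : ∀ z ∈ I, κ (N + 1) z ≠ 0)
    (u W : ℝ → ℝ)
    (hu : u = fun z => deriv (κ (N + 1)) z / κ (N + 1) z - deriv (κ N) z / κ N z)
    (hW : W = fun z => 2 * z +
      2 * (deriv (deriv (κ N)) z * κ N z - (deriv (κ N) z) ^ 2) / (κ N z) ^ 2) :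
    ∀ z ∈ I,
      (deriv (deriv u) z = 2 * (u z) ^ 3 - 4 * z * u z + 4 * (((N : ℝ) + 1 / 2) + 1 / 2)) ∧
      (2 * W z * deriv (deriv W) z - (deriv W z) ^ 2 + 4 * (W z) ^ 3
        - 8 * z * (W z) ^ 2 + 16 * ((N : ℝ) + 1 / 2) ^ 2 = 0) := by
  choose p hp using exists_poly a ha_zero ha_rec
  have hp0 : p 0 = X := by
    apply Polynomial.funext
    intro z
    have := congrFun (hp 0) z
    rw [ha_zero] at this
    simpa using this.symm
  have hprec : ∀ n, p (n + 1) = derivative (p n) + ∑ k ∈ Finset.range n, p k * p (n - 1 - k) := by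
    intro n
    apply Polynomial.funext
    intro z
    have := congrFun (ha_rec n) z
    simp only [hp, Polynomial.deriv] at this
    rw [this, eval_add, eval_finsetSum]
    simp only [eval_mul]
  let k : ℕ → ℝ[X] := fun n => (Matrix.of fun i j : Fin n => p ((i : ℕ) + (j : ℕ))).det
  have hκk : ∀ n, κ n = fun z => (k n).eval z := by
    intro n
    rw [hκ]
    ext1 z
    simp only [k]
    rw [← Polynomial.coe_evalRingHom, RingHom.map_det]
    congr 1
    ext1 i j
    simp [hp]
  obtain ⟨j, -, -, hT, hA, hB⟩ := bilinear_all k (by simp [k]) (by simp [k, hp0])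
    (fun n => toda p hp0 hprec k (fun _ => rfl) n) N
  simp only [hκk] at hκN_ne hκN1_ne
  have hu' : u = fun z => (derivative (k (N + 1))).eval z / (k (N + 1)).eval z
      - (derivative (k N)).eval z / (k N).eval z := by
    rw [hu, hκk, hκk]
    ext1 z
    simp only [Polynomial.deriv]
  have hdd : deriv (fun z => (k N).eval z) = fun z => (derivative (k N)).eval z := by
    ext1 z
    exact Polynomial.deriv _
  have hW' : W = fun z => 2 * z + 2 * ((derivative (derivative (k N))).eval z * (k N).eval z
      - ((derivative (k N)).eval z) ^ 2) / ((k N).eval z) ^ 2 := by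
    rw [hW, hκk, hdd]
    ext1 z
    simp only [Polynomial.deriv]
  have hWj : ∀ z ∈ I, W z = 2 * ((k (N + 1)).eval z * j.eval z) / ((k N).eval z) ^ 2 := by
    intro z hz
    have h1 := hκN_ne z hz
    have h2 := congrArg (eval z) hT
    simp only [eval_add, eval_sub, eval_mul, eval_pow, eval_X] at h2
    rw [h2, hW']
    field_simp
    ring
  have hu1 : ∀ z ∈ I, HasDerivAt u (2 * z - W z - u z ^ 2) z := by
    intro z hz
    have h1 := hκN_ne z hz
    have h2 := hκN1_ne z hz
    have h3 := congrArg (eval z) hA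
    simp only [eval_add, eval_sub, eval_mul, eval_ofNat, eval_zero] at h3
    rw [hu', hW']
    have h := (((derivative (k (N + 1))).hasDerivAt z).div ((k (N + 1)).hasDerivAt z) h2).sub
      (((derivative (k N)).hasDerivAt z).div ((k N).hasDerivAt z) h1)
    refine h.congr_deriv ?_
    field_simp
    linear_combination (eval z (k N)) * (eval z (k (N + 1))) * h3
  have hW1 : ∀ z ∈ I, HasDerivAt W (2 * u z * W z - (4 * N + 2)) z := by
    intro z hz
    have h1 := hκN_ne z hz
    have h2 := hκN1_ne z hz
    have h3 := congrArg (eval z) hB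
    simp only [eval_add, eval_sub, eval_mul, eval_ofNat, eval_pow, eval_one, eval_natCast] at h3
    have h := ((((k (N + 1)).hasDerivAt z).mul (j.hasDerivAt z)).const_mul 2).div
      (((k N).hasDerivAt z).pow 2) (pow_ne_zero 2 h1)
    have he : W =ᶠ[nhds z] fun z => 2 * ((k (N + 1)).eval z * j.eval z) / ((k N).eval z) ^ 2 := by
      filter_upwards [hIopen.mem_nhds hz] with y hy using hWj y hy
    refine HasDerivAt.congr_of_eventuallyEq (h.congr_deriv ?_) he
    rw [hWj z hz, hu']
    simp only [Pi.mul_apply, Pi.pow_apply]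
    field_simp
    linear_combination (-2) * (eval z (k N)) ^ 2 * h3
  intro z hz
  have hmem := hIopen.mem_nhds hz
  have du : deriv u =ᶠ[nhds z] fun y => 2 * y - W y - u y ^ 2 := by
    filter_upwards [hmem] with y hy using (hu1 y hy).deriv
  have dW : deriv W =ᶠ[nhds z] fun y => 2 * u y * W y - (4 * N + 2) := by
    filter_upwards [hmem] with y hy using (hW1 y hy).deriv
  have ddu : deriv (deriv u) z = 2 * 1 - (2 * u z * W z - (4 * N + 2))
      - 2 * u z * (2 * z - W z - u z ^ 2) := by
    rw [du.deriv_eq]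
    have h := ((((hasDerivAt_id z).const_mul 2).sub (hW1 z hz)).sub ((hu1 z hz).pow 2)).deriv
    refine Eq.trans h ?_
    norm_num
  have ddW : deriv (deriv W) z = 2 * (2 * z - W z - u z ^ 2) * W z
      + 2 * u z * (2 * u z * W z - (4 * N + 2)) := by
    rw [dW.deriv_eq]
    exact ((((hu1 z hz).const_mul 2).mul (hW1 z hz)).sub_const _).deriv
  constructor
  · rw [ddu]; ring
  · rw [ddW, (hW1 z hz).deriv]; ring
end
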